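/- arXiv:2406.10752 — 3 statements merged into one kernel-verified Lean document; each statement's English description precedes it below -/
import Mathlib

section
/- Fix a chore-division instance with n ≥ 2 agents, m ≥ n chores, and additive cost functions. Suppose all agents agree on the set of the n−1 most costly chores: there exists a set T ⊆ M with |T| = n−1 such that for every agent i, every e ∈ T and every f ∈ M \ T, c_i({e}) ≥ c_i({f}). Then a max(2, n−2)-EFX allocation exists. -/
/-- `X` is an allocation: pairwise disjoint bundles covering all chores. -/
def IsAllocation {M : Type*} {n : ℕ} (X : Fin n → Finset M) : Prop :=
  (∀ i j : Fin n, i ≠ j → Disjoint (X i) (X j)) ∧ (∀ e : M, ∃ i : Fin n, e ∈ X i)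

/-- Invariant of the envy-cycle procedure, with `R` the set of chores still unassigned. -/
def StateOK {M : Type*} [DecidableEq M] {n : ℕ} (w : Fin n → M → ℝ) (R : Finset M)
    (A : Fin n → Finset M) : Prop :=
  (∀ i j : Fin n, i ≠ j → Disjoint (A i) (A j)) ∧ (∀ e : M, (∃ i, e ∈ A i) ↔ e ∉ R) ∧
  (∀ i j : Fin n, ∀ g ∈ R, w i g ≤ ∑ f ∈ A j, w i f) ∧
  (∀ i j : Fin n, ∀ e ∈ A i, ∑ f ∈ A i \ {e}, w i f ≤ 2 * ∑ f ∈ A j, w i f)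

/-- Permuting bundles along cycles of the cheapest-bundle map. -/
theorem exists_envy_free_agent {M : Type*} [DecidableEq M] {n : ℕ} (hn : 0 < n)
    (w : Fin n → M → ℝ) (hw : ∀ i e, 0 ≤ w i e) (R : Finset M)
    (A : Fin n → Finset M) (hA : StateOK w R A) :
    ∃ B : Fin n → Finset M, StateOK w R B ∧
      ∃ k, ∀ j, ∑ f ∈ B k, w k f ≤ ∑ f ∈ B j, w k f := by
  classical
  have : Nonempty (Fin n) := ⟨⟨0, hn⟩⟩
  have h1 : ∀ i : Fin n, ∃ k, ∀ j, ∑ f ∈ A k, w i f ≤ ∑ f ∈ A j, w i f :=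
    fun i => Finite.exists_min (fun k => ∑ f ∈ A k, w i f)
  choose p hp using h1
  let σ : Fin n → Fin n := fun i => if i ∈ Function.periodicPts p then p i else i
  have hbij := Function.bijOn_periodicPts p
  have hσ : Function.Injective σ := by
    intro i j hij
    simp only [σ] at hij
    split_ifs at hij with h1 h2 h2
    · exact hbij.injOn h1 h2 hij
    · exact absurd (hij ▸ hbij.mapsTo h1) h2
    · exact absurd (hij ▸ hbij.mapsTo h2) h1
    · exact hij
  have hsurj : Function.Surjective σ := Finite.surjective_of_injective hσ
  obtain ⟨hd, hc, hg, he⟩ := hA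
  have hne : ∃ k, k ∈ Function.periodicPts p := by
    obtain ⟨a, b, hab, h⟩ := Finite.exists_ne_map_eq_of_infinite (fun m : ℕ => p^[m] ⟨0, hn⟩)
    wlog hlt : a < b generalizing a b
    · exact this b a hab.symm h.symm (by omega)
    refine ⟨p^[a] ⟨0, hn⟩, b - a, by omega, ?_⟩
    change p^[b - a] (p^[a] ⟨0, hn⟩) = _
    rw [← Function.iterate_add_apply]
    have : b - a + a = b := by omega
    rw [this]
    exact h.symm
  refine ⟨fun i => A (σ i), ⟨?_, ?_, ?_, ?_⟩, ?_⟩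
  · intro i j hij
    exact hd _ _ (fun h => hij (hσ h))
  · intro e
    rw [← hc e]
    constructor
    · rintro ⟨i, hi⟩
      exact ⟨_, hi⟩
    · rintro ⟨i, hi⟩
      obtain ⟨k, rfl⟩ := hsurj i
      exact ⟨k, hi⟩
  · intro i j g hgR
    exact hg _ _ g hgR
  · intro i j e hei
    by_cases hi : i ∈ Function.periodicPts p
    · have hs : σ i = p i := by simp [σ, hi]
      have h1 : ∑ f ∈ A (σ i) \ {e}, w i f ≤ ∑ f ∈ A (σ i), w i f :=
        Finset.sum_le_sum_of_subset_of_nonneg Finset.sdiff_subset (fun _ _ _ => hw _ _)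
      have h2 : ∑ f ∈ A (σ i), w i f ≤ ∑ f ∈ A (σ j), w i f := by
        rw [hs]
        exact hp i _
      have h3 : 0 ≤ ∑ f ∈ A (σ j), w i f := Finset.sum_nonneg (fun _ _ => hw _ _)
      change ∑ f ∈ A (σ i) \ {e}, w i f ≤ 2 * ∑ f ∈ A (σ j), w i f
      linarith
    · have hs : σ i = i := by simp [σ, hi]
      simp only [hs] at hei ⊢
      exact he i _ e hei
  · obtain ⟨k, hk⟩ := hne
    refine ⟨k, fun j => ?_⟩
    have hs : σ k = p k := by simp [σ, hk]
    simp only [hs]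
    exact hp k _

/-- One chore can be handed out. -/
theorem state_step {M : Type*} [DecidableEq M] {n : ℕ} (hn : 0 < n)
    (w : Fin n → M → ℝ) (hw : ∀ i e, 0 ≤ w i e) (R : Finset M) (g : M) (hgR : g ∉ R)
    (A : Fin n → Finset M) (hA : StateOK w (insert g R) A) :
    ∃ B : Fin n → Finset M, StateOK w R B := by
  classical
  obtain ⟨B, ⟨hd, hc, hg, he⟩, k, hk⟩ := exists_envy_free_agent hn w hw _ A hA
  have hgB : ∀ i, g ∉ B i := fun i hi => ((hc g).1 ⟨i, hi⟩) (Finset.mem_insert_self _ _)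
  let C : Fin n → Finset M := fun i => if i = k then insert g (B k) else B i
  have hCk : C k = insert g (B k) := by simp [C]
  have hCn : ∀ i, i ≠ k → C i = B i := fun i hi => by simp [C, hi]
  have hsub : ∀ i, B i ⊆ C i := by
    intro i
    by_cases h : i = k
    · subst h
      rw [hCk]
      exact Finset.subset_insert _ _
    · rw [hCn i h]
  have hmono : ∀ i j, ∑ f ∈ B j, w i f ≤ ∑ f ∈ C j, w i f := fun i j =>
    Finset.sum_le_sum_of_subset_of_nonneg (hsub j) (fun _ _ _ => hw _ _)
  refine ⟨C, ?_, ?_, ?_, ?_⟩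
  · intro i j hij
    by_cases h : i = k
    · subst h
      rw [hCk, hCn j hij.symm, Finset.disjoint_insert_left]
      exact ⟨hgB j, hd _ _ hij⟩
    · by_cases h' : j = k
      · subst h'
        rw [hCk, hCn i h, Finset.disjoint_insert_right]
        exact ⟨hgB i, hd _ _ hij⟩
      · rw [hCn i h, hCn j h']
        exact hd _ _ hij
  · intro e
    constructor
    · rintro ⟨i, hi⟩ heR
      have h0 : ∀ i, e ∉ B i := fun i hi =>
        ((hc e).1 ⟨i, hi⟩) (Finset.mem_insert_of_mem heR)
      by_cases h : i = k
      · subst h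
        rw [hCk, Finset.mem_insert] at hi
        rcases hi with rfl | hi
        · exact hgR heR
        · exact h0 _ hi
      · rw [hCn i h] at hi
        exact h0 _ hi
    · intro heR
      by_cases h : e = g
      · subst h
        exact ⟨k, by rw [hCk]; exact Finset.mem_insert_self _ _⟩
      · obtain ⟨i, hi⟩ := (hc e).2 (by simp [h, heR])
        exact ⟨i, hsub i hi⟩
  · intro i j x hx
    exact (hg i j x (Finset.mem_insert_of_mem hx)).trans (hmono i j)
  · intro i j e hei
    by_cases h : i = k
    · subst h
      have h1 : ∑ f ∈ C i \ {e}, w i f ≤ ∑ f ∈ C i, w i f :=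
        Finset.sum_le_sum_of_subset_of_nonneg Finset.sdiff_subset (fun _ _ _ => hw _ _)
      have h2 : ∑ f ∈ C i, w i f = w i g + ∑ f ∈ B i, w i f := by
        rw [hCk, Finset.sum_insert (hgB i)]
      have h3 := hk j
      have h4 := hg i j g (Finset.mem_insert_self _ _)
      have h5 := hmono i j
      linarith
    · rw [hCn i h] at hei ⊢
      have := he i j e hei
      have h5 := hmono i j
      linarith

theorem state_finish {M : Type*} [DecidableEq M] {n : ℕ} (hn : 0 < n)
    (w : Fin n → M → ℝ) (hw : ∀ i e, 0 ≤ w i e) (R : Finset M) :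
    ∀ (A : Fin n → Finset M), StateOK w R A → ∃ B : Fin n → Finset M, StateOK w ∅ B := by
  induction R using Finset.induction_on with
  | empty => exact fun A hA => ⟨A, hA⟩
  | insert g R hg ih =>
    intro A hA
    obtain ⟨B, hB⟩ := state_step hn w hw R g hg A hA
    exact ih B hB

/-- The initial state: the top chores as singletons, plus a maximal acceptable set. -/
theorem state_init {M : Type*} [Fintype M] [DecidableEq M] {n : ℕ} (hn : 2 ≤ n)
    (w : Fin n → M → ℝ) (hw : ∀ i e, 0 ≤ w i e)
    (T : Finset M) (hT : T.card = n - 1)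
    (htop : ∀ i : Fin n, ∀ e ∈ T, ∀ f : M, f ∉ T → w i f ≤ w i e) :
    ∃ R : Finset M, ∃ A : Fin n → Finset M, StateOK w R A := by
  classical
  let P : Finset M → Prop := fun S => (∀ e ∈ S, e ∉ T) ∧
    ∃ h : Fin n, ∀ e ∈ S, ∀ t ∈ T, ∑ f ∈ S \ {e}, w h f ≤ 2 * w h t
  have hP0 : ∃ S, P S := ⟨∅, by simp, ⟨0, by omega⟩, by simp⟩
  obtain ⟨S, hS⟩ : ∃ S, Maximal P S := by
    obtain ⟨S, hS⟩ := (Set.toFinite {S | P S}).exists_maximal hP0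
    exact ⟨S, hS⟩
  obtain ⟨hST, h, hh⟩ := hS.prop
  have hbig : ∀ g, g ∉ T → g ∉ S → ∀ i : Fin n, ∀ x, x ∉ T → w i x ≤ ∑ f ∈ S, w i f := by
    intro g hgT hgS i x hx
    by_contra hlt
    push Not at hlt
    have hPi : P (insert g S) := by
      refine ⟨?_, i, ?_⟩
      · intro e he
        rcases Finset.mem_insert.1 he with rfl | he
        · exact hgT
        · exact hST e he
      · intro e he t ht
        have h1 : ∑ f ∈ insert g S \ {e}, w i f ≤ ∑ f ∈ insert g S, w i f :=
          Finset.sum_le_sum_of_subset_of_nonneg Finset.sdiff_subset (fun _ _ _ => hw _ _)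
        rw [Finset.sum_insert hgS] at h1
        have h2 := htop i t ht x hx
        have h3 := htop i t ht g hgT
        linarith
    exact hgS (hS.2 hPi (Finset.subset_insert g S) (Finset.mem_insert_self _ _))
  have hcard : Fintype.card {j : Fin n // j ≠ h} = Fintype.card T := by
    simp [Fintype.card_subtype_compl, hT]
  let φ := Fintype.equivOfCardEq hcard
  let A : Fin n → Finset M := fun i => if hi : i ≠ h then {(φ ⟨i, hi⟩ : M)} else S
  have hAh : A h = S := by simp [A]
  have hAn : ∀ i (hi : i ≠ h), A i = {(φ ⟨i, hi⟩ : M)} := fun i hi => by simp [A, hi]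
  refine ⟨Finset.univ.filter (fun e => e ∉ T ∧ e ∉ S), A, ?_, ?_, ?_, ?_⟩
  · intro i j hij
    by_cases hi : i = h
    · subst hi
      rw [hAh, hAn j hij.symm, Finset.disjoint_singleton_right]
      exact fun h' => hST _ h' (φ ⟨j, hij.symm⟩).2
    · by_cases hj : j = h
      · subst hj
        rw [hAh, hAn i hij, Finset.disjoint_singleton_left]
        exact fun h' => hST _ h' (φ ⟨i, hij⟩).2
      · rw [hAn i hi, hAn j hj, Finset.disjoint_singleton]
        intro h'
        have := φ.injective (Subtype.ext h')
        exact hij (congrArg Subtype.val this)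
  · intro e
    constructor
    · rintro ⟨i, hi⟩ he
      simp only [Finset.mem_filter, Finset.mem_univ, true_and] at he
      by_cases hih : i = h
      · subst hih
        rw [hAh] at hi
        exact he.2 hi
      · rw [hAn i hih, Finset.mem_singleton] at hi
        exact he.1 (hi ▸ (φ ⟨i, hih⟩).2)
    · intro he
      by_cases heS : e ∈ S
      · exact ⟨h, by rw [hAh]; exact heS⟩
      · have heT : e ∈ T := by
          by_contra heT
          exact he (by simp [heT, heS])
        obtain ⟨⟨i, hi⟩, hie⟩ := φ.surjective ⟨e, heT⟩
        exact ⟨i, by rw [hAn i hi, hie]; simp⟩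
  · intro i j g hg
    simp only [Finset.mem_filter, Finset.mem_univ, true_and] at hg
    by_cases hj : j = h
    · subst hj
      rw [hAh]
      exact hbig g hg.1 hg.2 i g hg.1
    · rw [hAn j hj, Finset.sum_singleton]
      exact htop i _ (φ ⟨j, hj⟩).2 g hg.1
  · intro i j e he
    have h0 : 0 ≤ ∑ f ∈ A j, w i f := Finset.sum_nonneg (fun _ _ => hw _ _)
    by_cases hi : i = h
    · subst hi
      by_cases hj : j = i
      · subst hj
        have h1 : ∑ f ∈ A j \ {e}, w j f ≤ ∑ f ∈ A j, w j f :=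
          Finset.sum_le_sum_of_subset_of_nonneg Finset.sdiff_subset (fun _ _ _ => hw _ _)
        linarith
      · rw [hAh] at he ⊢
        rw [hAn j hj, Finset.sum_singleton]
        exact hh e he _ (φ ⟨j, hj⟩).2
    · rw [hAn i hi, Finset.mem_singleton] at he
      rw [hAn i hi, he, Finset.sdiff_self, Finset.sum_empty]
      linarith

/-- Top-`(n-1)` agreement: if all agents (with additive costs given by item costs `w`)
agree on the set of the `n-1` most costly chores, a `max(2, n-2)`-EFX allocation exists. -/
theorem max_two_n_sub_two_efx_top_agreement
    (n : ℕ) (hn : 2 ≤ n) (M : Type*) [Fintype M] [DecidableEq M]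
    (hm : n ≤ Fintype.card M)
    (w : Fin n → M → ℝ) (hw : ∀ i e, 0 ≤ w i e)
    (T : Finset M) (hT : T.card = n - 1)
    (htop : ∀ i : Fin n, ∀ e ∈ T, ∀ f : M, f ∉ T → w i f ≤ w i e) :
    ∃ X : Fin n → Finset M, IsAllocation X ∧
      ∀ i j : Fin n, ∀ e ∈ X i,
        ∑ f ∈ X i \ {e}, w i f ≤ max 2 ((n : ℝ) - 2) * ∑ f ∈ X j, w i f := by
  obtain ⟨R, A, hA⟩ := state_init hn w hw T hT htop
  obtain ⟨B, hd, hc, -, he⟩ := state_finish (by omega) w hw R A hA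
  refine ⟨B, ⟨hd, fun e => (hc e).2 (by simp)⟩, fun i j e hei => (he i j e hei).trans ?_⟩
  exact mul_le_mul_of_nonneg_right (le_max_left _ _) (Finset.sum_nonneg (fun _ _ => hw _ _))
end

section
/- Fix a chore-division instance with n ≥ 2 agents and additive cost functions. Suppose the agents pairwise disagree on their n−1 most costly chores: for each agent i there exists a set T_i ⊆ M with |T_i| = n−1 such that c_i({e}) ≥ c_i({f}) for every e ∈ T_i and f ∈ M \ T_i, and the sets T_1,…,T_n are pairwise disjoint. Then a max(2, n−2)-EFX allocation exists. -/
/-- Top trading step: permute bundles so some agent becomes envy-free. -/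
lemma trade_perm {n : ℕ} (hn : 2 ≤ n) (v : Fin n → Fin n → ℝ) :
    ∃ σ : Fin n → Fin n, Function.Injective σ ∧
      (∀ i, σ i = i ∨ ∀ j, v i (σ i) ≤ v i j) ∧ ∃ i, ∀ j, v i (σ i) ≤ v i j := by
  classical
  have : Nonempty (Fin n) := ⟨⟨0, by omega⟩⟩
  have hf : ∀ i, ∃ k, ∀ j, v i k ≤ v i j := fun i => Finite.exists_min (v i)
  choose f hf using hf
  have hb := Function.bijOn_periodicPts f
  refine ⟨fun i => if i ∈ Function.periodicPts f then f i else i, ?_, ?_, ?_⟩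
  · intro a b hab
    dsimp only at hab
    split_ifs at hab with h1 h2 h2
    · exact hb.injOn h1 h2 hab
    · exact absurd (hab ▸ hb.mapsTo h1) h2
    · exact absurd (hab ▸ hb.mapsTo h2) h1
    · exact hab
  · intro i
    by_cases h : i ∈ Function.periodicPts f
    · right; simpa [h] using hf i
    · left; simp [h]
  · have : ∃ i, i ∈ Function.periodicPts f := by
      let i0 : Fin n := ⟨0, by omega⟩
      obtain ⟨a, b, hab, h⟩ :=
        Finite.exists_ne_map_eq_of_infinite (fun k : ℕ => f^[k] i0)
      wlog hlt : a < b generalizing a b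
      · exact this b a hab.symm h.symm (by omega)
      refine ⟨f^[a] i0, b - a, by omega, ?_⟩
      unfold Function.IsPeriodicPt Function.IsFixedPt
      rw [← Function.iterate_add_apply, Nat.sub_add_cancel hlt.le, h]
    obtain ⟨i, h⟩ := this
    exact ⟨i, by simpa [h] using hf i⟩

/-- The base allocation: each agent gets one top chore of every other agent. -/
lemma base_alloc (n : ℕ) (hn : 2 ≤ n) (M : Type*) [DecidableEq M]
    (w : Fin n → M → ℝ) (hw : ∀ i e, 0 ≤ w i e)
    (T : Fin n → Finset M) (hT : ∀ i, (T i).card = n - 1)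
    (htop : ∀ i : Fin n, ∀ e ∈ T i, ∀ f : M, f ∉ T i → w i f ≤ w i e)
    (hdisj : ∀ i j : Fin n, i ≠ j → Disjoint (T i) (T j)) (α : ℝ) (h2 : 2 ≤ α)
    (hα : (n : ℝ) - 2 ≤ α) :
    ∃ X : Fin n → Finset M, (∀ i j : Fin n, i ≠ j → Disjoint (X i) (X j)) ∧
      (∀ e, (∃ k, e ∈ T k) → ∃ i, e ∈ X i) ∧
      (∀ i j, j ≠ i → ∀ e, e ∉ T i → w i e ≤ ∑ f ∈ X j, w i f) ∧
      ∀ i j : Fin n, ∀ e ∈ X i,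
        ∑ f ∈ X i \ {e}, w i f ≤ α * ∑ f ∈ X j, w i f := by
  have hg : ∀ i, ∃ g : Fin n → M, Set.BijOn g (Finset.univ.erase i : Finset (Fin n)) (T i) := by
    intro i
    have : Nonempty M := by
      have : (T i).Nonempty := by rw [← Finset.card_pos, hT]; omega
      exact ⟨this.choose⟩
    apply Set.Finite.exists_bijOn_of_encard_eq (Finset.finite_toSet _)
    simp only [Set.encard_coe_eq_coe_finsetCard]
    rw [hT, Finset.card_erase_of_mem (Finset.mem_univ _)]
    simp
  choose g hg using hg
  have hgm : ∀ i j, j ≠ i → g i j ∈ T i := fun i j h => by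
    exact_mod_cast (hg i).mapsTo (by simpa using h)
  let X : Fin n → Finset M := fun j => (Finset.univ.erase j).image (fun i => g i j)
  have hX : ∀ j e, e ∈ X j ↔ ∃ i, i ≠ j ∧ g i j = e := by intro j e; simp [X]
  have inv : ∀ i j, j ≠ i → ∀ e, e ∉ T i → w i e ≤ ∑ f ∈ X j, w i f := by
    intro i j hji e he
    refine (htop i _ (hgm i j hji) e he).trans ?_
    exact Finset.single_le_sum (f := w i) (fun f _ => hw i f) ((hX _ _).2 ⟨i, hji.symm, rfl⟩)
  refine ⟨X, ?_, ?_, inv, ?_⟩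
  · intro i j hij
    rw [Finset.disjoint_left]
    intro e h1 h2
    obtain ⟨a, ha, rfl⟩ := (hX _ _).1 h1
    obtain ⟨b, hb, hab⟩ := (hX _ _).1 h2
    have m1 := hgm a i ha.symm
    have m2 := hgm b j hb.symm
    by_cases h : a = b
    · subst h
      exact hij ((hg a).injOn (by simpa using ha.symm) (by simpa using hb.symm) hab.symm)
    · rw [hab] at m2
      exact Finset.disjoint_left.1 (hdisj a b h) m1 m2
  · rintro e ⟨k, hk⟩
    obtain ⟨j, hj, rfl⟩ := (hg k).surjOn (by exact_mod_cast hk : e ∈ (T k : Set M))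
    exact ⟨j, (hX _ _).2 ⟨k, by simpa [eq_comm] using hj, rfl⟩⟩
  · intro i j e he
    have nn : 0 ≤ ∑ f ∈ X j, w i f := Finset.sum_nonneg fun f _ => hw i f
    by_cases hji : j = i
    · subst hji
      have : ∑ f ∈ X j \ {e}, w j f ≤ ∑ f ∈ X j, w j f :=
        Finset.sum_le_sum_of_subset_of_nonneg Finset.sdiff_subset (fun f _ _ => hw j f)
      nlinarith
    · have hc : (X i \ {e}).card ≤ n - 2 := by
        have h1 : (X i).card ≤ n - 1 := by
          refine Finset.card_image_le.trans ?_
          rw [Finset.card_erase_of_mem (Finset.mem_univ _)]; simp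
        rw [Finset.sdiff_singleton_eq_erase, Finset.card_erase_of_mem he]; omega
      have hs : ∑ f ∈ X i \ {e}, w i f ≤ (X i \ {e}).card • ∑ f ∈ X j, w i f := by
        apply Finset.sum_le_card_nsmul
        intro f hf
        apply inv i j hji
        obtain ⟨a, ha, rfl⟩ := (hX _ _).1 (Finset.mem_sdiff.1 hf).1
        exact Finset.disjoint_left.1 (hdisj a i ha) (hgm a i ha.symm)
      rw [nsmul_eq_mul] at hs
      refine hs.trans (mul_le_mul_of_nonneg_right (le_trans ?_ hα) nn)
      have : ((X i \ {e}).card : ℝ) ≤ ((n - 2 : ℕ) : ℝ) := by exact_mod_cast hc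
      rwa [Nat.cast_sub hn] at this

theorem max_two_n_sub_two_efx_top_disagreement
    (n : ℕ) (hn : 2 ≤ n) (M : Type*) [Fintype M] [DecidableEq M]
    (w : Fin n → M → ℝ) (hw : ∀ i e, 0 ≤ w i e)
    (T : Fin n → Finset M) (hT : ∀ i, (T i).card = n - 1)
    (htop : ∀ i : Fin n, ∀ e ∈ T i, ∀ f : M, f ∉ T i → w i f ≤ w i e)
    (hdisj : ∀ i j : Fin n, i ≠ j → Disjoint (T i) (T j)) :
    ∃ X : Fin n → Finset M, IsAllocation X ∧
      ∀ i j : Fin n, ∀ e ∈ X i,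
        ∑ f ∈ X i \ {e}, w i f ≤ max 2 ((n : ℝ) - 2) * ∑ f ∈ X j, w i f := by
  have h2 : (2 : ℝ) ≤ max 2 ((n : ℝ) - 2) := le_max_left _ _
  have hα : (n : ℝ) - 2 ≤ max 2 ((n : ℝ) - 2) := le_max_right _ _
  generalize max 2 ((n : ℝ) - 2) = α at h2 hα ⊢
  have key : ∀ R : Finset M, ∃ X : Fin n → Finset M,
      (∀ i j : Fin n, i ≠ j → Disjoint (X i) (X j)) ∧
      (∀ e, (e ∈ R ∨ ∃ k, e ∈ T k) → ∃ i, e ∈ X i) ∧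
      (∀ i j, j ≠ i → ∀ e, e ∉ T i → w i e ≤ ∑ f ∈ X j, w i f) ∧
      ∀ i j : Fin n, ∀ e ∈ X i,
        ∑ f ∈ X i \ {e}, w i f ≤ α * ∑ f ∈ X j, w i f := by
    intro R
    induction R using Finset.induction_on with
    | empty => simpa using base_alloc n hn M w hw T hT htop hdisj α h2 hα
    | insert a R _ ih =>
      obtain ⟨X, hd, hcov, inv, efx⟩ := ih
      by_cases ha : ∃ i, a ∈ X i
      · refine ⟨X, hd, ?_, inv, efx⟩
        rintro e (he | he)
        · rcases Finset.mem_insert.1 he with rfl | he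
          · exact ha
          · exact hcov e (Or.inl he)
        · exact hcov e (Or.inr he)
      have haT : ∀ k, a ∉ T k := fun k hk => ha (hcov a (Or.inr ⟨k, hk⟩))
      push Not at ha
      obtain ⟨σ, σinj, hσ, s, hs⟩ := trade_perm hn (fun i j => ∑ f ∈ X j, w i f)
      have σsurj : Function.Surjective σ := Finite.surjective_of_injective σinj
      have nn : ∀ i (S : Finset M), 0 ≤ ∑ f ∈ S, w i f :=
        fun i S => Finset.sum_nonneg fun f _ => hw i f
      -- the traded allocation
      have inv' : ∀ i j, j ≠ i → ∀ e, e ∉ T i → w i e ≤ ∑ f ∈ X (σ j), w i f := by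
        intro i j hji e he
        by_cases h : σ j = i
        · have hne : σ i ≠ i := fun h' => hji (σinj (h.trans h'.symm))
          exact (inv i (σ i) hne e he).trans (((hσ i).resolve_left hne) (σ j))
        · exact inv i _ h e he
      have sub : ∀ i (S : Finset M) e, ∑ f ∈ S \ {e}, w i f ≤ ∑ f ∈ S, w i f := fun i S e =>
        Finset.sum_le_sum_of_subset_of_nonneg Finset.sdiff_subset (fun f _ _ => hw i f)
      have efx' : ∀ i j : Fin n, ∀ e ∈ X (σ i),
          ∑ f ∈ X (σ i) \ {e}, w i f ≤ α * ∑ f ∈ X (σ j), w i f := by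
        intro i j e he
        rcases hσ i with h | h
        · rw [h] at he ⊢
          exact efx i _ e he
        · have h1 := sub i (X (σ i)) e
          have h3 := h (σ j)
          have := nn i (X (σ j))
          nlinarith
      let Y : Fin n → Finset M := fun i => if i = s then insert a (X (σ i)) else X (σ i)
      have Ys : Y s = insert a (X (σ s)) := by simp [Y]
      have Yn : ∀ i, i ≠ s → Y i = X (σ i) := fun i h => by simp [Y, h]
      have hXY : ∀ i, X (σ i) ⊆ Y i := by
        intro i
        by_cases h : i = s
        · subst h; rw [Ys]; exact Finset.subset_insert _ _
        · rw [Yn i h]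
      have le : ∀ i j, ∑ f ∈ X (σ j), w i f ≤ ∑ f ∈ Y j, w i f := fun i j =>
        Finset.sum_le_sum_of_subset_of_nonneg (hXY j) (fun f _ _ => hw i f)
      refine ⟨Y, ?_, ?_, ?_, ?_⟩
      · intro i j hij
        have hd' := hd _ _ (σinj.ne hij)
        by_cases h : i = s
        · subst h
          rw [Ys, Yn j hij.symm, Finset.disjoint_insert_left]
          exact ⟨ha _, hd'⟩
        · rw [Yn i h]
          by_cases h' : j = s
          · subst h'
            rw [Ys, Finset.disjoint_insert_right]
            exact ⟨ha _, hd'⟩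
          · rwa [Yn j h']
      · intro e he
        by_cases hea : e = a
        · exact ⟨s, by rw [Ys, hea]; exact Finset.mem_insert_self _ _⟩
        · obtain ⟨i, hi⟩ := hcov e (by simpa [hea] using he)
          obtain ⟨j, rfl⟩ := σsurj i
          exact ⟨j, hXY j hi⟩
      · intro i j hji e he
        exact (inv' i j hji e he).trans (le i j)
      · intro i j e he
        by_cases h : i = s
        · subst h
          by_cases hji : j = i
          · subst hji
            have h1 := sub j (Y j) e
            have := nn j (Y j)
            nlinarith
          · have h1 := sub i (Y i) e
            have h3 : ∑ f ∈ Y i, w i f = w i a + ∑ f ∈ X (σ i), w i f := by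
              rw [Ys, Finset.sum_insert (ha _)]
            have h4 := inv' i j hji a (haT i)
            have h5 := hs (σ j)
            have h6 := le i j
            have := nn i (Y j)
            nlinarith
        · rw [Yn i h] at he ⊢
          exact (efx' i j e he).trans (mul_le_mul_of_nonneg_left (le i j) (by linarith))
  obtain ⟨X, hd, hcov, -, efx⟩ := key Finset.univ
  exact ⟨X, ⟨hd, fun e => hcov e (Or.inl (Finset.mem_univ _))⟩, efx⟩
end

section
/- For every chore-division instance with three agents and additive cost functions, a 2-EFX allocation exists. -/
section Helpers

variable {M : Type*} [Fintype M] [DecidableEq M]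

/-- cost of a bundle -/
def cs (v : M → ℝ) (A : Finset M) : ℝ := ∑ f ∈ A, v f

/-- an agent with cost `v` holding `P` does not `2`-EFX-envy `Q` -/
def okk (v : M → ℝ) (P Q : Finset M) : Prop :=
  ∀ e ∈ P, cs v (P \ {e}) ≤ 2 * cs v Q

/-- the goal for three cost functions -/
def Goal (u v w : M → ℝ) : Prop :=
  ∃ A B C : Finset M, Disjoint A B ∧ Disjoint A C ∧ Disjoint B C ∧
    (∀ e, e ∈ A ∨ e ∈ B ∨ e ∈ C) ∧
    okk u A B ∧ okk u A C ∧ okk v B A ∧ okk v B C ∧ okk w C A ∧ okk w C B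

lemma cs_union (v : M → ℝ) {A B : Finset M} (h : Disjoint A B) :
    cs v (A ∪ B) = cs v A + cs v B := Finset.sum_union h

lemma cs_nonneg {v : M → ℝ} (hv : ∀ e, 0 ≤ v e) (A : Finset M) : 0 ≤ cs v A :=
  Finset.sum_nonneg fun e _ => hv e

lemma cs_mono {v : M → ℝ} (hv : ∀ e, 0 ≤ v e) {A B : Finset M} (h : A ⊆ B) :
    cs v A ≤ cs v B := Finset.sum_le_sum_of_subset_of_nonneg h fun e _ _ => hv e

@[simp] lemma cs_empty (v : M → ℝ) : cs v ∅ = 0 := by simp [cs]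

@[simp] lemma cs_singleton (v : M → ℝ) (a : M) : cs v {a} = v a := by simp [cs]

lemma cs_insert (v : M → ℝ) {a : M} {A : Finset M} (h : a ∉ A) :
    cs v (insert a A) = v a + cs v A := Finset.sum_insert h

lemma cs_sdiff_single (v : M → ℝ) {a : M} {A : Finset M} (h : a ∈ A) :
    cs v (A \ {a}) = cs v A - v a := by
  have := Finset.sum_sdiff (f := v) (Finset.singleton_subset_iff.mpr h)
  simp only [Finset.sum_singleton] at this
  unfold cs; linarith

lemma cs_sdiff (v : M → ℝ) {A B : Finset M} (h : B ⊆ A) :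
    cs v (A \ B) = cs v A - cs v B := by
  have := Finset.sum_sdiff (f := v) h
  unfold cs; linarith

lemma le_cs {v : M → ℝ} (hv : ∀ e, 0 ≤ v e) {A : Finset M} {a : M} (h : a ∈ A) :
    v a ≤ cs v A := by
  have := cs_mono hv (Finset.singleton_subset_iff.mpr h)
  simpa using this

lemma ok_le {v : M → ℝ} (hv : ∀ e, 0 ≤ v e) {P Q : Finset M} (h : cs v P ≤ 2 * cs v Q) :
    okk v P Q := fun e _ => (cs_mono hv Finset.sdiff_subset).trans h

lemma ok_single {v : M → ℝ} (hv : ∀ e, 0 ≤ v e) (a : M) (Q : Finset M) :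
    okk v {a} Q := by
  intro e he
  rw [cs_sdiff_single v he]
  simp only [Finset.mem_singleton] at he
  subst he
  have := cs_nonneg hv Q
  simp; linarith

lemma ok_of {v : M → ℝ} {P Q : Finset M} (h : ∀ e ∈ P, cs v P - v e ≤ 2 * cs v Q) :
    okk v P Q := fun e he => by rw [cs_sdiff_single v he]; exact h e he

lemma ok_pair {v : M → ℝ} {a b : M} (hab : a ≠ b) {Q : Finset M}
    (ha : v a ≤ 2 * cs v Q) (hb : v b ≤ 2 * cs v Q) : okk v {a, b} Q := by
  apply ok_of
  intro e he
  rw [cs_insert v (by simpa using hab), cs_singleton]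
  simp only [Finset.mem_insert, Finset.mem_singleton] at he
  rcases he with rfl | rfl <;> linarith

lemma Goal.swap12 {u v w : M → ℝ} (h : Goal u v w) : Goal v u w := by
  obtain ⟨A, B, C, h1, h2, h3, h4, a, b, c, d, e, f⟩ := h
  exact ⟨B, A, C, h1.symm, h3, h2, fun e => by have := h4 e; tauto, c, d, a, b, f, e⟩

lemma Goal.swap23 {u v w : M → ℝ} (h : Goal u v w) : Goal u w v := by
  obtain ⟨A, B, C, h1, h2, h3, h4, a, b, c, d, e, f⟩ := h
  exact ⟨A, C, B, h2, h1, h3.symm, fun e => by have := h4 e; tauto, b, a, e, f, c, d⟩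

lemma Goal.swap13 {u v w : M → ℝ} (h : Goal u v w) : Goal w v u :=
  h.swap12.swap23.swap12

lemma cs_univ3 (v : M → ℝ) {A B C : Finset M} (h1 : Disjoint A B) (h2 : Disjoint A C)
    (h3 : Disjoint B C) (h : ∀ e, e ∈ A ∨ e ∈ B ∨ e ∈ C) :
    cs v Finset.univ = cs v A + cs v B + cs v C := by
  rw [← cs_union v h1, ← cs_union v (Finset.disjoint_union_left.mpr ⟨h2, h3⟩)]
  congr 1
  ext e
  have := h e
  simp; tauto

/-- EFX cut into two parts. -/
lemma cut {v : M → ℝ} (hv : ∀ e, 0 ≤ v e) (D : Finset M) :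
    ∃ P Q : Finset M, Disjoint P Q ∧ P ∪ Q = D ∧ cs v Q ≤ cs v P ∧
      ∀ e ∈ P, cs v P - v e ≤ cs v Q := by
  obtain ⟨P1, h1, h1m⟩ := Finset.exists_min_image
    (D.powerset.filter fun P => cs v (D \ P) ≤ cs v P) (cs v)
    ⟨D, by simp [cs_nonneg hv D]⟩
  obtain ⟨P, h2, h2m⟩ := Finset.exists_min_image
    (D.powerset.filter fun P => cs v (D \ P) ≤ cs v P ∧ cs v P ≤ cs v P1) Finset.card
    ⟨P1, by simp at h1 ⊢; exact h1⟩
  simp only [Finset.mem_filter, Finset.mem_powerset, and_imp] at h1 h1m h2 h2m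
  obtain ⟨hPD, hPge, hPle⟩ := h2
  refine ⟨P, D \ P, Finset.disjoint_sdiff, Finset.union_sdiff_of_subset hPD, hPge, ?_⟩
  intro e he
  have e1 := cs_sdiff_single v he
  have eD := cs_sdiff v hPD
  have hs : P \ {e} ⊆ D := Finset.sdiff_subset.trans hPD
  have eD' := cs_sdiff v hs
  by_cases hc : cs v (D \ (P \ {e})) ≤ cs v (P \ {e})
  · have a1 := h1m _ hs hc
    have a2 := h2m _ hs hc (by have := hv e; linarith)
    have : (P \ {e}).card < P.card := Finset.card_lt_card
      (by rw [Finset.ssubset_iff_of_subset Finset.sdiff_subset]; exact ⟨e, he, by simp⟩)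
    omega
  · push Not at hc
    have hs2 : D \ (P \ {e}) ⊆ D := Finset.sdiff_subset
    have a1 := h1m _ hs2 (by rw [Finset.sdiff_sdiff_eq_self hs]; exact hc.le)
    linarith

/-- An item that is large for two agents. -/
lemma caseI {u v w : M → ℝ} (hu : ∀ e, 0 ≤ u e) (hv : ∀ e, 0 ≤ v e) (hw : ∀ e, 0 ≤ w e)
    (g : M) (h1 : cs u Finset.univ ≤ 5 * u g) (h2 : cs v Finset.univ ≤ 5 * v g) :
    Goal u v w := by
  obtain ⟨P, Q, hd, hun, hle, hex⟩ := cut hu (Finset.univ \ {g})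
  have hmem : ∀ e, e ∈ P ∨ e ∈ Q ↔ e ≠ g := fun e => by
    rw [← Finset.mem_union, hun]; simp
  have dP : Disjoint P {g} := by
    rw [Finset.disjoint_singleton_right]; intro h; exact (hmem g).1 (Or.inl h) rfl
  have dQ : Disjoint Q {g} := by
    rw [Finset.disjoint_singleton_right]; intro h; exact (hmem g).1 (Or.inr h) rfl
  have hc : ∀ e, e ∈ P ∨ e ∈ Q ∨ e ∈ ({g} : Finset M) := fun e => by
    have := hmem e
    simp only [Finset.mem_singleton]; tauto
  have su := cs_univ3 u hd dP dQ hc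
  have sv := cs_univ3 v hd dP dQ hc
  simp only [cs_singleton] at su sv
  have a1 := cs_nonneg hu P
  have a2 := cs_nonneg hu Q
  have a3 := cs_nonneg hv P
  have a4 := cs_nonneg hv Q
  rcases le_total (cs v P) (cs v Q) with h | h
  · refine ⟨Q, P, {g}, hd.symm, dQ, dP, fun e => by have := hc e; tauto, ?_, ?_, ?_, ?_, ok_single hw _ _, ok_single hw _ _⟩
    · exact ok_le hu (by linarith)
    · exact ok_le hu (by rw [cs_singleton]; linarith)
    · exact ok_le hv (by linarith)
    · exact ok_le hv (by rw [cs_singleton]; linarith)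
  · refine ⟨P, Q, {g}, hd, dP, dQ, hc, ?_, ?_, ?_, ?_, ok_single hw _ _, ok_single hw _ _⟩
    · exact ok_of fun e he => by have := hex e he; linarith
    · exact ok_of fun e he => by have := hex e he; have := hu e; rw [cs_singleton]; linarith
    · exact ok_le hv (by linarith)
    · exact ok_le hv (by rw [cs_singleton]; linarith)

lemma perm3 : ∀ i j k : Fin 3, i ≠ j → i ≠ k → j ≠ k →
    ∃ σ : Equiv.Perm (Fin 3), σ 0 = i ∧ σ 1 = j ∧ σ 2 = k := by decide

lemma third3 : ∀ i j : Fin 3, i ≠ j → ∃ k : Fin 3, i ≠ k ∧ j ≠ k := by decide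

lemma other3 : ∀ i : Fin 3, ∃ j k : Fin 3, i ≠ j ∧ i ≠ k ∧ j ≠ k := by decide

lemma cover3 : ∀ i j k l : Fin 3, i ≠ j → i ≠ k → j ≠ k → l = i ∨ l = j ∨ l = k := by decide

lemma sort3 (f : Fin 3 → ℝ) : ∃ i j k : Fin 3, i ≠ j ∧ i ≠ k ∧ j ≠ k ∧ f i ≤ f j ∧ f j ≤ f k := by
  rcases le_total (f 0) (f 1) with h | h <;> rcases le_total (f 0) (f 2) with h' | h' <;>
    rcases le_total (f 1) (f 2) with h'' | h''
  · exact ⟨0, 1, 2, by decide, by decide, by decide, h, h''⟩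
  · exact ⟨0, 2, 1, by decide, by decide, by decide, h', h''⟩
  · exact ⟨0, 1, 2, by decide, by decide, by decide, h, h''⟩
  · exact ⟨2, 0, 1, by decide, by decide, by decide, h', h⟩
  · exact ⟨1, 0, 2, by decide, by decide, by decide, h, h'⟩
  · exact ⟨1, 0, 2, by decide, by decide, by decide, h, h'⟩
  · exact ⟨1, 2, 0, by decide, by decide, by decide, h'', h'⟩
  · exact ⟨2, 1, 0, by decide, by decide, by decide, h'', h⟩

lemma top3 {v : M → ℝ} (hv : ∀ e, 0 ≤ v e) (S : Finset M) (hS : S.Nonempty) (m : ℝ)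
    (hm0 : 0 ≤ m) (hm : ∀ e ∈ S, v e ≤ m) :
    ∃ (A : Fin 3 → Finset M) (m' : ℝ), (∀ i, (A i).card ≤ 1) ∧ (∀ i j, i ≠ j → Disjoint (A i) (A j)) ∧
      (∀ i, A i ⊆ S) ∧ (A 0).Nonempty ∧ 0 ≤ m' ∧ (∀ e ∈ S, (∀ i, e ∉ A i) → v e ≤ m') ∧
      (∀ j, m' ≤ cs v (A j)) ∧ ∀ j, cs v (A j) ≤ m := by
  obtain ⟨a, ha, hamax⟩ := Finset.exists_max_image S v hS
  by_cases hS1 : (S \ {a}).Nonempty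
  · obtain ⟨b, hb, hbmax⟩ := Finset.exists_max_image _ v hS1
    simp only [Finset.mem_sdiff, Finset.mem_singleton] at hb hbmax
    by_cases hS2 : ((S \ {a}) \ {b}).Nonempty
    · obtain ⟨c, hc, hcmax⟩ := Finset.exists_max_image _ v hS2
      simp only [Finset.mem_sdiff, Finset.mem_singleton] at hc hcmax
      refine ⟨![{a}, {b}, {c}], v c, ?_, ?_, ?_, ?_, hv c, ?_, ?_, ?_⟩
      · simp [Fin.forall_fin_succ]
      · have h1 := hb.2
        have h2 := hc.2
        have h3 := hc.1.2
        simp [Fin.forall_fin_succ, h1, h2, h3, Ne.symm h1, Ne.symm h2, Ne.symm h3]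
      · simp [Fin.forall_fin_succ, ha, hb.1, hc.1.1]
      · simp
      · intro e he h
        have h0 := h 0
        have h1 := h 1
        simp at h0 h1
        exact hcmax e ⟨⟨he, h0⟩, h1⟩
      · simp [Fin.forall_fin_succ, hamax c hc.1.1, hbmax c hc.1]
      · simp [Fin.forall_fin_succ, hm a ha, hm b hb.1, hm c hc.1.1]
    · refine ⟨![{a}, {b}, ∅], 0, ?_, ?_, ?_, ?_, le_rfl, ?_, fun j => cs_nonneg hv _, ?_⟩
      · simp [Fin.forall_fin_succ]
      · have h1 := hb.2
        simp [Fin.forall_fin_succ, h1, Ne.symm h1]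
      · simp [Fin.forall_fin_succ, ha, hb.1]
      · simp
      · intro e he h
        have h0 := h 0
        have h1 := h 1
        simp at h0 h1
        exact absurd ⟨e, by simp [he, h0, h1]⟩ hS2
      · simp [Fin.forall_fin_succ, hm a ha, hm b hb.1, hm0]
  · refine ⟨![{a}, ∅, ∅], 0, ?_, ?_, ?_, ?_, le_rfl, ?_, fun j => cs_nonneg hv _, ?_⟩
    · simp [Fin.forall_fin_succ]
    · simp [Fin.forall_fin_succ]
    · simp [Fin.forall_fin_succ, ha]
    · simp
    · intro e he h
      have h0 := h 0
      simp at h0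
      exact absurd ⟨e, by simp [he, h0]⟩ hS1
    · simp [Fin.forall_fin_succ, hm a ha, hm0]

lemma rule {v : M → ℝ} (hv : ∀ e, 0 ≤ v e) (Qp : (Fin 3 → Finset M) → Prop)
    (h0 : Qp fun _ => ∅)
    (step : ∀ X A : Fin 3 → Finset M, Qp X → (∀ i, (A i).card ≤ 1) → (∀ i j, i ≠ j → Disjoint (A i) (A j)) →
      (∀ i j, Disjoint (X i) (A j)) → ∃ σ : Equiv.Perm (Fin 3), Qp fun i => X i ∪ A (σ i)) :
    ∀ (n : ℕ) (S : Finset M) (m : ℝ), S.card = n → 0 ≤ m → (∀ e ∈ S, v e ≤ m) →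
      ∃ X, Qp X ∧ (∀ i j, i ≠ j → Disjoint (X i) (X j)) ∧ (∀ e, e ∈ S ↔ ∃ i, e ∈ X i) ∧
        ∀ i j, cs v (X i) ≤ cs v (X j) + m := by
  intro n
  induction n using Nat.strong_induction_on with
  | _ n ih =>
    intro S m hn hm0 hm
    by_cases hS : S.Nonempty
    · obtain ⟨A, m', hA1, hAd, hAS, hA0, hm'0, hm', hAm', hAm⟩ := top3 hv S hS m hm0 hm
      set T := S.filter fun e => ∀ i, e ∉ A i with hT
      have hlt : T.card < n := by
        rw [← hn]
        apply Finset.card_lt_card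
        rw [Finset.ssubset_iff_of_subset (Finset.filter_subset _ _)]
        obtain ⟨x, hx⟩ := hA0
        exact ⟨x, hAS 0 hx, fun h => (Finset.mem_filter.1 h).2 0 hx⟩
      obtain ⟨X, hQ, hXd, hXS, hXm⟩ := ih _ hlt T m' rfl hm'0
        (fun e he => hm' e (Finset.mem_filter.1 he).1 (Finset.mem_filter.1 he).2)
      have hXA : ∀ i j, Disjoint (X i) (A j) := by
        intro i j
        rw [Finset.disjoint_left]
        intro e he hj
        exact (Finset.mem_filter.1 ((hXS e).2 ⟨i, he⟩)).2 j hj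
      obtain ⟨σ, hσ⟩ := step X A hQ hA1 hAd hXA
      refine ⟨_, hσ, ?_, ?_, ?_⟩
      · intro i j hij
        simp only [Finset.disjoint_union_left, Finset.disjoint_union_right]
        exact ⟨⟨hXd i j hij, (hXA _ _).symm⟩, hXA _ _, hAd _ _ fun h => hij (σ.injective h)⟩
      · intro e
        constructor
        · intro he
          by_cases h : ∀ i, e ∉ A i
          · obtain ⟨i, hi⟩ := (hXS e).1 (Finset.mem_filter.2 ⟨he, h⟩)
            exact ⟨i, Finset.mem_union_left _ hi⟩
          · push Not at h
            obtain ⟨i, hi⟩ := h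
            exact ⟨σ.symm i, Finset.mem_union_right _ (by simpa using hi)⟩
        · rintro ⟨i, hi⟩
          rcases Finset.mem_union.1 hi with h | h
          · exact (Finset.mem_filter.1 ((hXS e).2 ⟨i, h⟩)).1
          · exact hAS _ h
      · intro i j
        rw [cs_union v (hXA _ _), cs_union v (hXA _ _)]
        have := hXm i j
        have := hAm (σ i)
        have := hAm' (σ j)
        linarith
    · rw [Finset.not_nonempty_iff_eq_empty] at hS
      subst hS
      exact ⟨_, h0, by simp, by simp, by simp [hm0]⟩

/-- Two agents with only small items. -/
lemma caseS {u v w : M → ℝ} (hu : ∀ e, 0 ≤ u e) (hv : ∀ e, 0 ≤ v e) (hw : ∀ e, 0 ≤ w e)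
    (h1 : ∀ e, 5 * u e ≤ cs u Finset.univ) (h2 : ∀ e, 5 * v e ≤ cs v Finset.univ) :
    Goal u v w := by
  have U0 := cs_nonneg hu Finset.univ
  have V0 := cs_nonneg hv Finset.univ
  obtain ⟨X, hQ, hXd, hXS, hXm⟩ := rule hv
    (fun X => ∀ i j, cs u (X i) ≤ cs u (X j) + cs u Finset.univ / 5) (by simp; linarith)
    (by
      intro X A hX hA hAd hXA
      obtain ⟨i, j, k, hij, hik, hjk, l1, l2⟩ := sort3 fun i => cs u (X i)
      obtain ⟨p, q, r, hpq, hpr, hqr, l3, l4⟩ := sort3 fun i => cs u (A i)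
      obtain ⟨σ, s0, s1, s2⟩ := perm3 i j k hij hik hjk
      obtain ⟨τ, t0, t1, t2⟩ := perm3 r q p hqr.symm hpr.symm hpq.symm
      have b : ∀ i, cs u (A i) ≤ cs u Finset.univ / 5 := by
        intro i
        rcases Nat.le_one_iff_eq_zero_or_eq_one.1 (hA i) with h | h
        · rw [Finset.card_eq_zero] at h
          rw [h]; simp; linarith
        · obtain ⟨a, ha⟩ := Finset.card_eq_one.1 h
          rw [ha]; simp; linarith [h1 a]
      have b0 : ∀ i, 0 ≤ cs u (A i) := fun i => cs_nonneg hu _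
      refine ⟨τ * σ.symm, ?_⟩
      have e0 : (τ * σ.symm) i = r := by
        rw [← s0]; simp [t0]
      have e1 : (τ * σ.symm) j = q := by
        rw [← s1]; simp [t1]
      have e2 : (τ * σ.symm) k = p := by
        rw [← s2]; simp [t2]
      intro x y
      simp only [cs_union u (hXA _ _)]
      have := hX i j
      have := hX i k
      have := hX j k
      have := hX k i
      have := hX k j
      have := hX j i
      have := b p
      have := b q
      have := b r
      have := b0 p
      have := b0 q
      have := b0 r
      rcases cover3 i j k x hij hik hjk with hx | hx | hx <;>
      rcases cover3 i j k y hij hik hjk with hy | hy | hy <;>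
      simp only [hx, hy, e0, e1, e2] <;> linarith)
    _ Finset.univ (cs v Finset.univ / 5) rfl (by linarith) (fun e _ => by linarith [h2 e])
  obtain ⟨i, j, k, hij, hik, hjk, l1, l2⟩ := sort3 fun i => cs w (X i)
  have hc : ∀ e, e ∈ X j ∨ e ∈ X k ∨ e ∈ X i := by
    intro e
    obtain ⟨l, hl⟩ := (hXS e).1 (Finset.mem_univ e)
    rcases cover3 i j k l hij hik hjk with rfl | rfl | rfl <;> tauto
  have su := cs_univ3 u (hXd _ _ hjk) (hXd _ _ hij.symm) (hXd _ _ hik.symm) hc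
  have sv := cs_univ3 v (hXd _ _ hjk) (hXd _ _ hij.symm) (hXd _ _ hik.symm) hc
  have w0 := cs_nonneg hw (X i)
  refine ⟨X j, X k, X i, hXd _ _ hjk, hXd _ _ hij.symm, hXd _ _ hik.symm, hc, ?_, ?_, ?_, ?_, ?_, ?_⟩
  · exact ok_le hu (by linarith [hQ j k, hQ i k, hQ j i])
  · exact ok_le hu (by linarith [hQ k i, hQ j i])
  · exact ok_le hv (by linarith [hXm k j, hXm i j])
  · exact ok_le hv (by linarith [hXm k i, hXm j i])
  · exact ok_le hw (by linarith)
  · exact ok_le hw (by linarith)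

/-- `w` holds `X`, `u` accepts both other bundles, `v` picks the cheaper of these. -/
lemma choose2 {u v w : M → ℝ} (hv : ∀ e, 0 ≤ v e) {X Y Z : Finset M}
    (dYZ : Disjoint Y Z) (dYX : Disjoint Y X) (dZX : Disjoint Z X)
    (hc : ∀ e, e ∈ Y ∨ e ∈ Z ∨ e ∈ X)
    (w1 : okk w X Y) (w2 : okk w X Z) (u1 : okk u Y Z) (u2 : okk u Y X) (u3 : okk u Z Y)
    (u4 : okk u Z X) (hX : cs v Finset.univ ≤ 5 * cs v X) : Goal u v w := by
  have s := cs_univ3 v dYZ dYX dZX hc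
  have y0 := cs_nonneg hv Y
  have z0 := cs_nonneg hv Z
  rcases le_total (cs v Y) (cs v Z) with h | h
  · exact ⟨Z, Y, X, dYZ.symm, dZX, dYX, fun e => by have := hc e; tauto, u3, u4,
      ok_le hv (by linarith), ok_le hv (by linarith), w2, w1⟩
  · exact ⟨Y, Z, X, dYZ, dYX, dZX, hc, u1, u2,
      ok_le hv (by linarith), ok_le hv (by linarith), w1, w2⟩

lemma bag {w : M → ℝ} (hw : ∀ e, 0 ≤ w e) (t : ℝ) (T : Finset M)
    (h2 : ∀ e ∈ T, w e ≤ 2 * t) (hT : t ≤ cs w T) :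
    ∃ B, (B ⊆ T ∧ t ≤ cs w B ∧ cs w B ≤ 2 * t) ∨ (B = ∅ ∧ t ≤ 0) := by
  by_cases ht : t ≤ 0
  · exact ⟨∅, Or.inr ⟨rfl, ht⟩⟩
  push Not at ht
  by_cases he : ∃ e ∈ T, t ≤ w e
  · obtain ⟨e, heT, he⟩ := he
    exact ⟨{e}, Or.inl ⟨by simpa using heT, by simpa using he, by simpa using h2 e heT⟩⟩
  push Not at he
  obtain ⟨B, h2, h2m⟩ := Finset.exists_min_image
    (T.powerset.filter fun P => t ≤ cs w P) Finset.card ⟨T, by simp [hT]⟩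
  simp only [Finset.mem_filter, Finset.mem_powerset, and_imp] at h2 h2m
  refine ⟨B, Or.inl ⟨h2.1, h2.2, ?_⟩⟩
  have hne : B.Nonempty := by
    rw [Finset.nonempty_iff_ne_empty]
    rintro rfl
    have := h2.2
    simp at this
    linarith
  obtain ⟨e, heB⟩ := hne
  by_contra hcon
  push Not at hcon
  have e1 := cs_sdiff_single w heB
  have := he e (h2.1 heB)
  have a := h2m (B \ {e}) (Finset.sdiff_subset.trans h2.1) (by linarith)
  have : (B \ {e}).card < B.card := Finset.card_lt_card
      (by rw [Finset.ssubset_iff_of_subset Finset.sdiff_subset]; exact ⟨e, heB, by simp⟩)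
  omega

lemma bag2 {w : M → ℝ} (hw : ∀ e, 0 ≤ w e) {t : ℝ} (ht : 0 ≤ t) (T : Finset M)
    (h2 : ∀ e ∈ T, w e ≤ 2 * t) (hT : t ≤ cs w T) :
    ∃ B, B ⊆ T ∧ t ≤ cs w B ∧ cs w B ≤ 2 * t := by
  obtain ⟨B, h | h⟩ := bag hw t T h2 hT
  · exact ⟨B, h⟩
  · exact ⟨∅, by simp, by simp [h.2], by simp [ht]⟩

lemma bags3 {w : M → ℝ} (hw : ∀ e, 0 ≤ w e) {t : ℝ} (ht : 0 ≤ t) (T : Finset M)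
    (h2 : ∀ e ∈ T, w e ≤ 2 * t) (hT : 5 * t ≤ cs w T) :
    ∃ B : Fin 3 → Finset M, (∀ i, B i ⊆ T) ∧ (∀ i, t ≤ cs w (B i)) ∧
      ∀ i j, i ≠ j → Disjoint (B i) (B j) := by
  obtain ⟨A, hA, a1, a2⟩ := bag2 hw ht T h2 (by linarith)
  have e1 := cs_sdiff w hA
  obtain ⟨B, hB, b1, b2⟩ := bag2 hw ht (T \ A) (fun e he => h2 e (Finset.sdiff_subset he))
    (by linarith)
  have e2 := cs_sdiff w hB
  have d1 : Disjoint A B := (Finset.disjoint_sdiff.mono_right hB)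
  have d2 : Disjoint A ((T \ A) \ B) := (Finset.disjoint_sdiff.mono_right Finset.sdiff_subset)
  have d3 : Disjoint B ((T \ A) \ B) := Finset.disjoint_sdiff
  refine ⟨![A, B, (T \ A) \ B], ?_, ?_, ?_⟩
  · intro i
    fin_cases i
    · exact hA
    · exact hB.trans Finset.sdiff_subset
    · exact Finset.sdiff_subset.trans Finset.sdiff_subset
  · intro i
    fin_cases i
    · exact a1
    · exact b1
    · change t ≤ cs w ((T \ A) \ B)
      linarith
  · intro i j hij
    fin_cases i <;> fin_cases j <;> first | exact absurd rfl hij | skip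
    · exact d1
    · exact d2
    · exact d1.symm
    · exact d3
    · exact d2.symm
    · exact d3.symm

lemma balance {u : M → ℝ} (hu : ∀ e, 0 ≤ u e) {d : ℝ} (P Q D : Finset M) (hPQ : Disjoint P Q)
    (h1 : cs u P ≤ cs u Q + d) (h2 : cs u Q ≤ cs u P + d) (hPD : Disjoint P D)
    (hQD : Disjoint Q D) (hD : ∀ e ∈ D, u e ≤ d) :
    ∃ P' Q', P ⊆ P' ∧ Q ⊆ Q' ∧ Disjoint P' Q' ∧ P' ∪ Q' = P ∪ Q ∪ D ∧
      cs u P' ≤ cs u Q' + d ∧ cs u Q' ≤ cs u P' + d := by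
  induction D using Finset.induction_on with
  | empty => exact ⟨P, Q, subset_rfl, subset_rfl, hPQ, by simp, h1, h2⟩
  | insert a D ha ih =>
    rw [Finset.disjoint_insert_right] at hPD hQD
    obtain ⟨P', Q', hP, hQ, hd, hun, k1, k2⟩ := ih hPD.2 hQD.2
      (fun e he => hD e (Finset.mem_insert_of_mem he))
    have hna : a ∉ P' ∪ Q' := by
      rw [hun]; simp [hPD.1, hQD.1, ha]
    rw [Finset.mem_union, not_or] at hna
    have had := hD a (Finset.mem_insert_self _ _)
    have ha0 := hu a
    rcases le_total (cs u P') (cs u Q') with h | h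
    · refine ⟨insert a P', Q', hP.trans (Finset.subset_insert _ _), hQ, ?_, ?_, ?_, ?_⟩
      · rw [Finset.disjoint_insert_left]; exact ⟨hna.2, hd⟩
      · rw [Finset.insert_union, hun, Finset.union_insert]
      · rw [cs_insert u hna.1]; linarith
      · rw [cs_insert u hna.1]; linarith
    · refine ⟨P', insert a Q', hP, hQ.trans (Finset.subset_insert _ _), ?_, ?_, ?_, ?_⟩
      · rw [Finset.disjoint_insert_right]; exact ⟨hna.1, hd⟩
      · rw [Finset.union_insert, hun, Finset.union_insert]
      · rw [cs_insert u hna.2]; linarith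
      · rw [cs_insert u hna.2]; linarith

lemma split {u w : M → ℝ} (hu : ∀ e, 0 ≤ u e) (hw : ∀ e, 0 ≤ w e) {t : ℝ} (ht : 0 ≤ t)
    (R : Finset M) (hR : 6 * t ≤ cs w R) (h2 : ∀ e ∈ R, w e ≤ 2 * t)
    (hh : ∀ e ∈ R, 2 * u e ≤ cs u R) :
    ∃ Y Z, Disjoint Y Z ∧ Y ∪ Z = R ∧ t ≤ cs w Y ∧ t ≤ cs w Z ∧
      cs u R ≤ 3 * cs u Y ∧ cs u R ≤ 3 * cs u Z := by
  by_cases hx : ∃ h ∈ R, cs u R < 3 * u h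
  · obtain ⟨h, hhR, hbig⟩ := hx
    have eu := cs_sdiff_single u hhR
    have ew := cs_sdiff_single w hhR
    have hh' := hh h hhR
    have h2' := h2 h hhR
    have hsub : ({h} : Finset M) ⊆ R := by simpa using hhR
    by_cases hwh : t ≤ w h
    · refine ⟨{h}, R \ {h}, Finset.disjoint_sdiff, Finset.union_sdiff_of_subset hsub, ?_, ?_, ?_, ?_⟩
      · simpa using hwh
      · linarith
      · simp; linarith
      · have := hu h
        linarith
    · push Not at hwh
      obtain ⟨B, hB, hBt, hBd⟩ := bags3 hw ht (R \ {h})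
        (fun e he => h2 e (Finset.sdiff_subset he)) (by linarith)
      obtain ⟨i, j, k, hij, hik, hjk, l1, l2⟩ := sort3 fun i => cs u (B i)
      have hni : h ∉ B i := fun hm => by have := hB i hm; simp at this
      have hsubi : insert h (B i) ⊆ R := by
        intro e he
        rcases Finset.mem_insert.1 he with rfl | he
        · exact hhR
        · exact Finset.sdiff_subset (hB i he)
      have hdj : B j ∪ B k ⊆ R \ insert h (B i) := by
        intro e he
        have h1 : e ∈ R \ {h} := by
          rcases Finset.mem_union.1 he with he | he
          · exact hB _ he
          · exact hB _ he
        have h3 : e ∉ B i := by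
          rcases Finset.mem_union.1 he with he | he
          · exact Finset.disjoint_left.1 (hBd j i hij.symm) he
          · exact Finset.disjoint_left.1 (hBd k i hik.symm) he
        simp at h1
        simp [h1, h3]
      have m1 := cs_mono hu hdj
      have m2 := cs_mono hw hdj
      rw [cs_union _ (hBd j k hjk)] at m1 m2
      have s1 := cs_sdiff u hsubi
      have s2 := cs_insert u hni
      have s3 := cs_insert w hni
      have := hBt i
      have := hBt j
      have := hBt k
      have := hw h
      have := cs_nonneg hu (B i)
      refine ⟨insert h (B i), R \ insert h (B i), Finset.disjoint_sdiff,
        Finset.union_sdiff_of_subset hsubi, ?_, ?_, ?_, ?_⟩ <;> linarith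
  · push Not at hx
    obtain ⟨B, hB, hBt, hBd⟩ := bags3 hw ht R h2 (by linarith)
    obtain ⟨i, j, k, hij, hik, hjk, l1, l2⟩ := sort3 fun i => cs u (B i)
    have key : ∃ p q, p ≠ q ∧ cs u (B p) ≤ cs u (B q) ∧ cs u (B q) ≤ cs u (B p) + cs u R / 3 := by
      have m1 : cs u (B j ∪ B k) ≤ cs u R := cs_mono hu (Finset.union_subset (hB j) (hB k))
      rw [cs_union u (hBd j k hjk)] at m1
      have := cs_nonneg hu (B i)
      by_cases hc : cs u (B j) ≤ cs u (B i) + cs u R / 3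
      · exact ⟨i, j, hij, l1, hc⟩
      · exact ⟨j, k, hjk, l2, by linarith⟩
    obtain ⟨p, q, hpq, k1, k2⟩ := key
    have R0 := cs_nonneg hu R
    obtain ⟨P, Q, hP, hQ, hd, hun, g1, g2⟩ := balance hu (d := cs u R / 3) (B p) (B q)
      (R \ (B p ∪ B q)) (hBd p q hpq) (by linarith) k2
      (Finset.disjoint_sdiff.mono_left Finset.subset_union_left)
      (Finset.disjoint_sdiff.mono_left Finset.subset_union_right)
      (fun e he => by have := hx e (Finset.sdiff_subset he); linarith)
    rw [Finset.union_sdiff_of_subset (Finset.union_subset (hB p) (hB q))] at hun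
    have s := cs_union u hd
    rw [hun] at s
    exact ⟨P, Q, hd, hun, (hBt p).trans (cs_mono hw hP), (hBt q).trans (cs_mono hw hQ),
      by linarith, by linarith⟩

lemma caseA2 {u v w : M → ℝ} (hu : ∀ e, 0 ≤ u e) (hv : ∀ e, 0 ≤ v e) (hw : ∀ e, 0 ≤ w e)
    (hws : ∀ e, 5 * w e ≤ cs w Finset.univ) (G1 G2 : M) (hne : G1 ≠ G2)
    (hv2 : cs v Finset.univ ≤ 5 * v G2)
    (h3 : cs u (Finset.univ \ {G1, G2}) ≤ 3 * u G2)
    (hh : ∀ e ∈ (Finset.univ \ {G1, G2} : Finset M), 2 * u e ≤ cs u (Finset.univ \ {G1, G2})) :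
    Goal u v w := by
  have ec : ∀ c : M → ℝ, cs c {G1, G2} = c G1 + c G2 := fun c => by
    rw [cs_insert c (by simpa using hne), cs_singleton]
  have es := cs_sdiff w (Finset.subset_univ {G1, G2})
  rw [ec] at es
  have W0 := cs_nonneg hw Finset.univ
  obtain ⟨Y, Z, hd, hun, y1, z1, y2, z2⟩ := split hu hw (t := cs w Finset.univ / 10) (by linarith)
    (Finset.univ \ {G1, G2}) (by linarith [hws G1, hws G2]) (fun e _ => by linarith [hws e]) hh
  have hmem : ∀ e, e ∈ Y ∨ e ∈ Z ↔ e ∉ ({G1, G2} : Finset M) := fun e => by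
    rw [← Finset.mem_union, hun]; simp
  have su := cs_union u hd
  rw [hun] at su
  have u0 := hu G1
  refine choose2 hv (X := {G1, G2}) hd ?_ ?_ ?_ ?_ ?_ ?_ ?_ ?_ ?_ ?_
  · rw [Finset.disjoint_left]; intro e he; exact (hmem e).1 (Or.inl he)
  · rw [Finset.disjoint_left]; intro e he; exact (hmem e).1 (Or.inr he)
  · intro e; have := hmem e; tauto
  · exact ok_pair hne (by linarith [hws G1]) (by linarith [hws G2])
  · exact ok_pair hne (by linarith [hws G1]) (by linarith [hws G2])
  · exact ok_le hu (by linarith)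
  · exact ok_le hu (by rw [ec]; linarith)
  · exact ok_le hu (by linarith)
  · exact ok_le hu (by rw [ec]; linarith)
  · rw [ec]; linarith [hv G1]

lemma eq_single_of {A : Finset M} (h : A.card ≤ 1) {g : M} (hg : g ∈ A) : A = {g} := by
  rw [Finset.card_le_one] at h
  ext x
  simp only [Finset.mem_singleton]
  exact ⟨fun hx => h x hx g hg, fun hx => hx ▸ hg⟩

/-- `u` with the two special items set to zero -/
def zap (u : M → ℝ) (G1 G2 : M) : M → ℝ := fun e => if e = G1 ∨ e = G2 then 0 else u e

lemma zap_nonneg {u : M → ℝ} (hu : ∀ e, 0 ≤ u e) (G1 G2 : M) : ∀ e, 0 ≤ zap u G1 G2 e := by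
  intro e
  unfold zap
  split_ifs
  · exact le_rfl
  · exact hu e

lemma zap_le {u : M → ℝ} (hu : ∀ e, 0 ≤ u e) (G1 G2 : M) (A : Finset M) :
    cs (zap u G1 G2) A ≤ cs u A := by
  apply Finset.sum_le_sum
  intro e _
  unfold zap
  split_ifs
  · exact hu e
  · exact le_rfl

lemma zap_eq {u : M → ℝ} (G1 G2 : M) {A : Finset M} (h1 : G1 ∉ A) (h2 : G2 ∉ A) :
    cs u A = cs (zap u G1 G2) A := by
  apply Finset.sum_congr rfl
  intro e he
  unfold zap
  rw [if_neg]
  rintro (rfl | rfl) <;> contradiction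

lemma zap_eq1 {u : M → ℝ} (G1 G2 : M) {A : Finset M} (h1 : G1 ∈ A) (h2 : G2 ∉ A) :
    cs u A = u G1 + cs (zap u G1 G2) A := by
  have a := cs_sdiff_single u h1
  have b := cs_sdiff_single (zap u G1 G2) h1
  have c := zap_eq (u := u) G1 G2 (A := A \ {G1}) (by simp) (by simp [h2])
  have d : zap u G1 G2 G1 = 0 := by simp [zap]
  linarith

lemma zap_eq2 {u : M → ℝ} (G1 G2 : M) {A : Finset M} (h1 : G1 ∉ A) (h2 : G2 ∈ A) :
    cs u A = u G2 + cs (zap u G1 G2) A := by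
  have a := cs_sdiff_single u h2
  have b := cs_sdiff_single (zap u G1 G2) h2
  have c := zap_eq (u := u) G1 G2 (A := A \ {G2}) (by simp [h1]) (by simp)
  have d : zap u G1 G2 G2 = 0 := by simp [zap]
  linarith

lemma slots {u : M → ℝ} (hu : ∀ e, 0 ≤ u e) (G1 G2 : M) (hne : G1 ≠ G2)
    (hmax : ∀ e, u e ≤ u G1) (A : Fin 3 → Finset M) (hA : ∀ i, (A i).card ≤ 1)
    (hAd : ∀ i j, i ≠ j → Disjoint (A i) (A j)) :
    ∃ i j k, i ≠ j ∧ i ≠ k ∧ j ≠ k ∧ G1 ∉ A j ∧ G1 ∉ A k ∧ G2 ∉ A i ∧ G2 ∉ A k ∧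
      cs (zap u G1 G2) (A i) ≤ cs (zap u G1 G2) (A k) ∧
      cs (zap u G1 G2) (A j) ≤ cs (zap u G1 G2) (A k) ∧
      cs (zap u G1 G2) (A j) ≤ cs u (A i) := by
  have z0 := zap_nonneg hu G1 G2
  have c0 : ∀ i, 0 ≤ cs (zap u G1 G2) (A i) := fun i => cs_nonneg z0 _
  have d0 : ∀ i, 0 ≤ cs u (A i) := fun i => cs_nonneg hu _
  have g1 : zap u G1 G2 G1 = 0 := by simp [zap]
  have g2 : zap u G1 G2 G2 = 0 := by simp [zap]
  have n1 : ∀ p q, p ≠ q → G1 ∈ A p → G1 ∉ A q := fun p q h hp =>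
    Finset.disjoint_left.1 (hAd p q h) hp
  have n2 : ∀ p q, p ≠ q → G2 ∈ A p → G2 ∉ A q := fun p q h hp =>
    Finset.disjoint_left.1 (hAd p q h) hp
  have le1 : ∀ i, cs (zap u G1 G2) (A i) ≤ u G1 := by
    intro i
    refine (zap_le hu G1 G2 _).trans ?_
    rcases Nat.le_one_iff_eq_zero_or_eq_one.1 (hA i) with h | h
    · rw [Finset.card_eq_zero] at h
      rw [h]; simpa using hu G1
    · obtain ⟨a, ha⟩ := Finset.card_eq_one.1 h
      rw [ha]; simpa using hmax a
  by_cases h1 : ∃ p, G1 ∈ A p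
  · obtain ⟨p, hp⟩ := h1
    have ep := eq_single_of (hA p) hp
    have zp : cs (zap u G1 G2) (A p) = 0 := by rw [ep]; simpa using g1
    have up : cs u (A p) = u G1 := by rw [ep]; simp
    have n2p : G2 ∉ A p := by rw [ep]; simpa using hne.symm
    by_cases h2 : ∃ q, G2 ∈ A q
    · obtain ⟨q, hq⟩ := h2
      have eq := eq_single_of (hA q) hq
      have zq : cs (zap u G1 G2) (A q) = 0 := by rw [eq]; simpa using g2
      have hpq : p ≠ q := by rintro rfl; exact n2p hq
      obtain ⟨k, h3, h4⟩ := third3 p q hpq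
      refine ⟨p, q, k, hpq, h3, h4, n1 _ _ hpq hp, n1 _ _ h3 hp, n2p, n2 _ _ h4 hq, ?_, ?_, ?_⟩
      · linarith [c0 k]
      · linarith [c0 k]
      · linarith [d0 p]
    · push Not at h2
      obtain ⟨j, k, h3, h4, h5⟩ := other3 p
      rcases le_total (cs (zap u G1 G2) (A j)) (cs (zap u G1 G2) (A k)) with h | h
      · refine ⟨p, j, k, h3, h4, h5, n1 _ _ h3 hp, n1 _ _ h4 hp, n2p, h2 _, ?_, h, ?_⟩
        · linarith [c0 k]
        · linarith [le1 j]
      · refine ⟨p, k, j, h4, h3, h5.symm, n1 _ _ h4 hp, n1 _ _ h3 hp, n2p, h2 _, ?_, h, ?_⟩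
        · linarith [c0 j]
        · linarith [le1 k]
  · push Not at h1
    by_cases h2 : ∃ q, G2 ∈ A q
    · obtain ⟨q, hq⟩ := h2
      have eq := eq_single_of (hA q) hq
      have zq : cs (zap u G1 G2) (A q) = 0 := by rw [eq]; simpa using g2
      obtain ⟨i, k, h3, h4, h5⟩ := other3 q
      rcases le_total (cs (zap u G1 G2) (A i)) (cs (zap u G1 G2) (A k)) with h | h
      · refine ⟨i, q, k, h3.symm, h5, h4, h1 _, h1 _, n2 _ _ h3 hq, n2 _ _ h4 hq, h, ?_, ?_⟩
        · linarith [c0 k]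
        · linarith [d0 i]
      · refine ⟨k, q, i, h4.symm, h5.symm, h3, h1 _, h1 _, n2 _ _ h4 hq, n2 _ _ h3 hq, h, ?_, ?_⟩
        · linarith [c0 i]
        · linarith [d0 k]
    · push Not at h2
      obtain ⟨j, i, k, hij, hik, hjk, l1, l2⟩ := sort3 fun i => cs (zap u G1 G2) (A i)
      exact ⟨i, j, k, hij.symm, hjk, hik, h1 _, h1 _, h2 _, h2 _, l2, l1.trans l2,
        l1.trans (zap_le hu G1 G2 _)⟩

lemma caseA {u v w : M → ℝ} (hu : ∀ e, 0 ≤ u e) (hv : ∀ e, 0 ≤ v e) (hw : ∀ e, 0 ≤ w e)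
    (hws : ∀ e, 5 * w e ≤ cs w Finset.univ) (G1 G2 : M) (hne : G1 ≠ G2)
    (hv2 : cs v Finset.univ ≤ 5 * v G2) (hmax : ∀ e, u e ≤ u G1) : Goal u v w := by
  by_cases hA0 : cs u (Finset.univ \ {G1, G2}) ≤ 2 * u G2
  · refine ⟨Finset.univ \ {G1, G2}, {G1}, {G2}, ?_, ?_, ?_, ?_, ?_, ?_, ok_single hv _ _,
      ok_single hv _ _, ok_single hw _ _, ok_single hw _ _⟩
    · simp
    · simp
    · simpa using hne
    · intro e
      simp only [Finset.mem_sdiff, Finset.mem_univ, Finset.mem_insert, Finset.mem_singleton]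
      tauto
    · exact ok_le hu (by rw [cs_singleton]; linarith [hmax G2])
    · exact ok_le hu (by rw [cs_singleton]; linarith)
  push Not at hA0
  have W0 := cs_nonneg hw Finset.univ
  have z0 := zap_nonneg hu G1 G2
  obtain ⟨X, ⟨q1, q2, q3, q4, q5, q6, q7⟩, hXd, hXS, hXm⟩ := rule hw
    (fun X => G1 ∉ X 1 ∧ G1 ∉ X 2 ∧ G2 ∉ X 0 ∧ G2 ∉ X 2 ∧
      cs (zap u G1 G2) (X 0) ≤ cs (zap u G1 G2) (X 2) ∧
      cs (zap u G1 G2) (X 1) ≤ cs (zap u G1 G2) (X 2) ∧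
      cs (zap u G1 G2) (X 1) ≤ cs u (X 0)) (by simp)
    (by
      rintro X A ⟨q1, q2, q3, q4, q5, q6, q7⟩ hA hAd hXA
      obtain ⟨i, j, k, hij, hik, hjk, r1, r2, r3, r4, r5, r6, r7⟩ :=
        slots hu G1 G2 hne hmax A hA hAd
      obtain ⟨σ, s0, s1, s2⟩ := perm3 i j k hij hik hjk
      refine ⟨σ, ?_⟩
      simp only [s0, s1, s2, cs_union _ (hXA _ _), Finset.mem_union, not_or]
      exact ⟨⟨q1, r1⟩, ⟨q2, r2⟩, ⟨q3, r3⟩, ⟨q4, r4⟩, by linarith, by linarith, by linarith⟩)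
    _ Finset.univ (cs w Finset.univ / 5) rfl (by linarith) (fun e _ => by linarith [hws e])
  have hc : ∀ e, e ∈ X 0 ∨ e ∈ X 1 ∨ e ∈ X 2 := by
    intro e
    obtain ⟨l, hl⟩ := (hXS e).1 (Finset.mem_univ e)
    rcases cover3 0 1 2 l (by decide) (by decide) (by decide) with rfl | rfl | rfl <;> tauto
  have d01 := hXd 0 1 (by decide)
  have d02 := hXd 0 2 (by decide)
  have d12 := hXd 1 2 (by decide)
  have m1 : G1 ∈ X 0 := by have := hc G1; tauto
  have m2 : G2 ∈ X 1 := by have := hc G2; tauto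
  have eX := zap_eq1 (u := u) G1 G2 m1 q3
  have eY := zap_eq2 (u := u) G1 G2 q1 m2
  have eZ := zap_eq (u := u) G1 G2 q2 q4
  have su := cs_univ3 u d01 d02 d12 hc
  have sv := cs_univ3 v d01 d02 d12 hc
  have sw := cs_univ3 w d01 d02 d12 hc
  have es := cs_sdiff u (Finset.subset_univ {G1, G2})
  rw [cs_insert u (by simpa using hne), cs_singleton] at es
  have vG := le_cs hv m2
  have v0 := cs_nonneg hv (X 0)
  have v2 := cs_nonneg hv (X 2)
  have wk : ∀ i j, cs w (X i) ≤ 2 * cs w (X j) := by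
    intro i j
    have a0 := hXm i j
    have a1 := hXm 0 j
    have a2 := hXm 1 j
    have a3 := hXm 2 j
    rcases cover3 0 1 2 i (by decide) (by decide) (by decide) with rfl | rfl | rfl <;>
    rcases cover3 0 1 2 j (by decide) (by decide) (by decide) with rfl | rfl | rfl <;>
      linarith
  have hG := hmax G2
  have x0 := cs_nonneg z0 (X 0)
  by_cases hY : cs u (X 1) ≤ 2 * cs u (X 2)
  · rcases le_total (cs v (X 0)) (cs v (X 2)) with h | h
    · refine ⟨X 1, X 0, X 2, d01.symm, d12, d02, fun e => by have := hc e; tauto, ?_, ?_, ?_, ?_,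
        ok_le hw (wk _ _), ok_le hw (wk _ _)⟩
      · exact ok_le hu (by linarith)
      · exact ok_le hu hY
      · exact ok_le hv (by linarith)
      · exact ok_le hv (by linarith)
    · refine ⟨X 1, X 2, X 0, d12, d01.symm, d02.symm, fun e => by have := hc e; tauto, ?_, ?_, ?_, ?_,
        ok_le hw (wk _ _), ok_le hw (wk _ _)⟩
      · exact ok_le hu hY
      · exact ok_le hu (by linarith)
      · exact ok_le hv (by linarith)
      · exact ok_le hv (by linarith)
  · push Not at hY
    apply caseA2 hu hv hw hws G1 G2 hne hv2
    · linarith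
    · intro e he
      simp only [Finset.mem_sdiff, Finset.mem_univ, true_and, Finset.mem_insert,
        Finset.mem_singleton, not_or] at he
      have ez : zap u G1 G2 e = u e := by simp [zap, he]
      rcases hc e with h | h | h
      · have := le_cs z0 h
        linarith
      · have := le_cs z0 h
        linarith
      · have := le_cs z0 h
        linarith

/-- Hypotheses of case B: `a`, `b`, `c` are distinct large maximal items of `u`, `v`, `w`. -/
structure BH (u v w : M → ℝ) (a b c : M) : Prop where
  hu : ∀ e, 0 ≤ u e
  hv : ∀ e, 0 ≤ v e
  hw : ∀ e, 0 ≤ w e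
  ab : a ≠ b
  ac : a ≠ c
  bc : b ≠ c
  ma : ∀ e, u e ≤ u a
  mb : ∀ e, v e ≤ v b
  mc : ∀ e, w e ≤ w c
  la : cs u Finset.univ ≤ 5 * u a
  lb : cs v Finset.univ ≤ 5 * v b
  lc : cs w Finset.univ ≤ 5 * w c

lemma BH.swap12 {u v w : M → ℝ} {a b c : M} (h : BH u v w a b c) : BH v u w b a c :=
  ⟨h.hv, h.hu, h.hw, h.ab.symm, h.bc, h.ac, h.mb, h.ma, h.mc, h.lb, h.la, h.lc⟩

lemma BH.swap23 {u v w : M → ℝ} {a b c : M} (h : BH u v w a b c) : BH u w v a c b :=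
  ⟨h.hu, h.hw, h.hv, h.ac, h.ab, h.bc.symm, h.ma, h.mc, h.mb, h.la, h.lc, h.lb⟩

/-- the normal items -/
def NN (a b c : M) : Finset M := Finset.univ \ {a, b, c}

lemma NN_swap12 (a b c : M) : NN b a c = NN a b c := by
  ext e; simp [NN]; tauto

lemma NN_swap23 (a b c : M) : NN a c b = NN a b c := by
  ext e; simp [NN]; tauto

lemma mem_NN {a b c e : M} : e ∈ NN a b c ↔ e ≠ a ∧ e ≠ b ∧ e ≠ c := by
  simp [NN]

lemma NN_sum (u : M → ℝ) {a b c : M} (ab : a ≠ b) (ac : a ≠ c) (bc : b ≠ c) :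
    cs u Finset.univ = u a + u b + u c + cs u (NN a b c) := by
  have := cs_sdiff u (Finset.subset_univ {a, b, c})
  rw [cs_insert u (by simp [ab, ac]), cs_insert u (by simpa using bc), cs_singleton] at this
  unfold NN
  linarith

lemma B0 {u v w : M → ℝ} {a b c : M} (H : BH u v w a b c) (h1 : u b ≤ u c)
    (h2 : cs u (NN a b c) ≤ u c) : Goal u v w := by
  have hb : b ∉ NN a b c := by simp [mem_NN]
  have e1 := cs_insert u hb
  refine ⟨insert b (NN a b c), {a}, {c}, ?_, ?_, ?_, ?_, ?_, ?_, ok_single H.hv _ _,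
    ok_single H.hv _ _, ok_single H.hw _ _, ok_single H.hw _ _⟩
  · simp [mem_NN, H.ab]
  · simp [mem_NN, H.bc.symm]
  · simp [H.ac]
  · intro e
    simp only [Finset.mem_insert, mem_NN, Finset.mem_singleton]
    tauto
  · exact ok_le H.hu (by rw [cs_singleton]; linarith [H.ma c])
  · exact ok_le H.hu (by rw [cs_singleton]; linarith)

/-- Either we are done or every agent values the normal items more than the other special ones. -/
lemma B0' {u v w : M → ℝ} {a b c : M} (H : BH u v w a b c) :
    Goal u v w ∨ (u b ≤ cs u (NN a b c) ∧ u c ≤ cs u (NN a b c)) := by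
  by_cases h : u b ≤ cs u (NN a b c) ∧ u c ≤ cs u (NN a b c)
  · exact Or.inr h
  · left
    rcases le_total (u b) (u c) with h1 | h1
    · apply B0 H h1
      by_contra h2
      push Not at h2
      exact h ⟨by linarith, h2.le⟩
    · apply Goal.swap23
      apply B0 H.swap23 h1
      rw [NN_swap23]
      by_contra h2
      push Not at h2
      exact h ⟨h2.le, by linarith⟩

lemma B1 {u v w : M → ℝ} {a b c : M} (H : BH u v w a b c)
    (h1 : cs u (NN a b c) ≤ 2 * u c) (h2 : w a ≤ cs w (NN a b c)) (h3 : w b ≤ cs w (NN a b c)) :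
    Goal u v w := by
  have N0 := cs_nonneg H.hw (NN a b c)
  have e1 : cs u {a, b} = u a + u b := by
    rw [cs_insert u (by simpa using H.ab), cs_singleton]
  refine ⟨NN a b c, {c}, {a, b}, ?_, ?_, ?_, ?_, ?_, ?_, ok_single H.hv _ _,
    ok_single H.hv _ _, ?_, ?_⟩
  · simp [mem_NN]
  · simp [mem_NN]
  · simp [H.ac.symm, H.bc.symm]
  · intro e
    simp only [Finset.mem_insert, mem_NN, Finset.mem_singleton]
    tauto
  · exact ok_le H.hu (by rw [cs_singleton]; linarith)
  · exact ok_le H.hu (by linarith [H.ma c, H.hu b])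
  · exact ok_pair H.ab (by linarith) (by linarith)
  · exact ok_pair H.ab (by rw [cs_singleton]; linarith [H.mc a, H.hw c])
      (by rw [cs_singleton]; linarith [H.mc b, H.hw c])

lemma B2 {u v w : M → ℝ} {a b c : M} (H : BH u v w a b c) (hcb : u c ≤ u b)
    (h2 : 2 * u c < cs u (NN a b c))
    (h3 : 2 * w a < cs w (NN a b c)) (h4 : 2 * w b < cs w (NN a b c)) :
    Goal u v w ∨ ∃ h ∈ NN a b c, cs u (NN a b c) ≤ 2 * u h := by
  obtain ⟨P, Q, hd, hun, hle, hex⟩ := cut H.hu (NN a b c)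
  have hmem : ∀ e, e ∈ P ∨ e ∈ Q ↔ e ≠ a ∧ e ≠ b ∧ e ≠ c := fun e => by
    rw [← Finset.mem_union, hun, mem_NN]
  have su := NN_sum u H.ab H.ac H.bc
  have la := H.la
  have eN := cs_union u hd
  have eW := cs_union w hd
  rw [hun] at eN eW
  have aP : a ∉ P := fun h => ((hmem a).1 (Or.inl h)).1 rfl
  have aQ : a ∉ Q := fun h => ((hmem a).1 (Or.inr h)).1 rfl
  have bP : b ∉ P := fun h => ((hmem b).1 (Or.inl h)).2.1 rfl
  have bQ : b ∉ Q := fun h => ((hmem b).1 (Or.inr h)).2.1 rfl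
  have cP : c ∉ P := fun h => ((hmem c).1 (Or.inl h)).2.2 rfl
  have cQ : c ∉ Q := fun h => ((hmem c).1 (Or.inr h)).2.2 rfl
  have pair : ∀ x : M → ℝ, cs x {a, b} = x a + x b := fun x => by
    rw [cs_insert x (by simpa using H.ab), cs_singleton]
  have ub := H.hu b
  have uc := H.hu c
  have wa := H.mc a
  have wb := H.mc b
  have wc0 := H.hw c
  have lb := H.lb
  have va := H.hv a
  have Q0 := cs_nonneg H.hu Q
  have wQ0 := cs_nonneg H.hw Q
  have wP0 := cs_nonneg H.hw P
  by_cases hP : cs w (NN a b c) ≤ 4 * cs w P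
  · left
    have ecQ := cs_insert u cQ
    have ecQw := cs_insert w cQ
    refine choose2 H.hv (X := {a, b}) (Y := insert c Q) (Z := P) ?_ ?_ ?_ ?_ ?_ ?_ ?_ ?_ ?_ ?_ ?_
    · rw [Finset.disjoint_insert_left]; exact ⟨cP, hd.symm⟩
    · simp [aQ, bQ, H.ac, H.bc]
    · simp [aP, bP]
    · intro e
      have := hmem e
      simp only [Finset.mem_insert, Finset.mem_singleton]
      tauto
    · exact ok_pair H.ab (by linarith) (by linarith)
    · exact ok_pair H.ab (by linarith) (by linarith)
    · exact ok_le H.hu (by linarith)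
    · exact ok_le H.hu (by rw [pair]; linarith)
    · exact ok_of fun e he => by have := hex e he; linarith
    · exact ok_of fun e he => by have := hex e he; rw [pair]; linarith
    · rw [pair]; linarith
  · push Not at hP
    have hPne : P.Nonempty := by
      rw [Finset.nonempty_iff_ne_empty]
      rintro rfl
      simp at hle eN
      linarith
    obtain ⟨e, heP, hemin⟩ := Finset.exists_min_image P u hPne
    by_cases hone : P = {e}
    · right
      refine ⟨e, mem_NN.2 ((hmem e).1 (Or.inl heP)), ?_⟩
      rw [hone, cs_singleton] at hle eN
      linarith
    left
    have hf : ∃ f ∈ P, f ≠ e := by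
      by_contra hcon
      push Not at hcon
      exact hone (Finset.eq_singleton_iff_unique_mem.2 ⟨heP, hcon⟩)
    obtain ⟨f, hfP, hfe⟩ := hf
    have eP := cs_sdiff_single u heP
    have hfm : f ∈ P \ {e} := by simp [hfP, hfe]
    have hf1 := le_cs H.hu hfm
    have hf2 := hemin f hfP
    have hxe := hex e heP
    have cPe : c ∉ P \ {e} := by simp [cP]
    have ecP := cs_insert u cPe
    have ecPw := cs_insert w cPe
    have wPe := cs_nonneg H.hw (P \ {e})
    obtain ⟨ea, eb, ec⟩ := (hmem e).1 (Or.inl heP)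
    have eQ : e ∉ Q := Finset.disjoint_left.1 hd heP
    have we := le_cs H.hw heP
    have wem := H.mc e
    have uem := H.ma e
    have ue0 := H.hu e
    have ve0 := H.hv e
    have ucm := H.ma c
    have dPQ : Disjoint (P \ {e}) Q := hd.mono_left Finset.sdiff_subset
    by_cases hcQ : u c ≤ cs u Q
    · have triple : ∀ x : M → ℝ, cs x {a, b, e} = x a + x b + x e := fun x => by
        rw [cs_insert x (by simp [H.ab, ea.symm]), cs_insert x (by simpa using eb.symm),
          cs_singleton]
        ring
      refine choose2 H.hv (X := {a, b, e}) (Y := insert c (P \ {e})) (Z := Q)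
        ?_ ?_ ?_ ?_ ?_ ?_ ?_ ?_ ?_ ?_ ?_
      · rw [Finset.disjoint_insert_left]; exact ⟨cQ, dPQ⟩
      · simp [aP, bP, H.ac, H.bc, ec]
      · simp [aQ, bQ, eQ]
      · intro x
        have := hmem x
        by_cases hx : x = e
        · simp [hx]
        · simp only [Finset.mem_insert, Finset.mem_singleton, Finset.mem_sdiff]
          tauto
      · apply ok_of
        intro x hx
        rw [triple]
        simp only [Finset.mem_insert, Finset.mem_singleton] at hx
        rcases hx with rfl | rfl | rfl <;> linarith
      · apply ok_le H.hw
        rw [triple]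
        linarith
      · exact ok_le H.hu (by linarith)
      · exact ok_le H.hu (by rw [triple]; linarith)
      · exact ok_le H.hu (by linarith)
      · exact ok_le H.hu (by rw [triple]; linarith)
      · rw [triple]; linarith
    · push Not at hcQ
      have eeQ := cs_insert u eQ
      have eeQw := cs_insert w eQ
      have we0 := H.hw e
      refine choose2 H.hv (X := {a, b}) (Y := insert c (P \ {e})) (Z := insert e Q)
        ?_ ?_ ?_ ?_ ?_ ?_ ?_ ?_ ?_ ?_ ?_
      · rw [Finset.disjoint_insert_left, Finset.disjoint_insert_right]
        exact ⟨by simp [cQ, ec.symm], by simp, dPQ⟩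
      · simp [aP, bP, H.ac, H.bc]
      · simp [aQ, bQ, ea.symm, eb.symm]
      · intro x
        have := hmem x
        by_cases hx : x = e
        · simp [hx]
        · simp only [Finset.mem_insert, Finset.mem_singleton, Finset.mem_sdiff]
          tauto
      · exact ok_pair H.ab (by linarith) (by linarith)
      · exact ok_pair H.ab (by linarith) (by linarith)
      · exact ok_le H.hu (by linarith)
      · exact ok_le H.hu (by rw [pair]; linarith)
      · exact ok_le H.hu (by linarith)
      · exact ok_le H.hu (by rw [pair]; linarith)
      · rw [pair]; linarith

lemma B2' {u v w : M → ℝ} {a b c : M} (H : BH u v w a b c)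
    (h1 : 2 * u b < cs u (NN a b c)) (h2 : 2 * u c < cs u (NN a b c))
    (h3 : 2 * v a < cs v (NN a b c)) (h4 : 2 * v c < cs v (NN a b c))
    (h5 : 2 * w a < cs w (NN a b c)) (h6 : 2 * w b < cs w (NN a b c)) :
    Goal u v w ∨ ∃ h ∈ NN a b c, cs u (NN a b c) ≤ 2 * u h := by
  rcases le_total (u c) (u b) with h | h
  · exact B2 H h h2 h5 h6
  · have := B2 H.swap23 h (by rwa [NN_swap23]) (by rwa [NN_swap23]) (by rwa [NN_swap23])
    rw [NN_swap23] at this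
    exact this.imp Goal.swap23 id

/-- agents `u` and `w` are dominated by the same item -/
lemma B3a {u v w : M → ℝ} {a b c : M} (H : BH u v w a b c)
    (h1 : 2 * u b < cs u (NN a b c)) (h2 : 2 * u c < cs u (NN a b c))
    (h5 : 2 * w a < cs w (NN a b c))
    (h : M) (hh : h ∈ NN a b c) (du : cs u (NN a b c) ≤ 2 * u h) (dw : cs w (NN a b c) ≤ 2 * w h) :
    Goal u v w := by
  have aN : a ∉ NN a b c \ {h} := by simp [mem_NN]
  have e1 := cs_insert w aN
  have e2 := cs_insert u aN
  have e3 := cs_sdiff_single w hh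
  have u0 := cs_nonneg H.hu (NN a b c \ {h})
  have wc : cs w {b, c} = w b + w c := by
    rw [cs_insert w (by simpa using H.bc), cs_singleton]
  have ua := H.hu a
  obtain ⟨ha, hb, hc⟩ := mem_NN.1 hh
  refine ⟨{b, c}, {h}, insert a (NN a b c \ {h}), ?_, ?_, ?_, ?_, ?_, ?_, ok_single H.hv _ _,
    ok_single H.hv _ _, ?_, ?_⟩
  · simp [hb, hc]
  · simp [mem_NN, H.ab, H.ac]
  · simp [ha]
  · intro e
    simp only [Finset.mem_insert, mem_NN, Finset.mem_singleton, Finset.mem_sdiff]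
    tauto
  · exact ok_pair H.bc (by rw [cs_singleton]; linarith [H.hu h])
      (by rw [cs_singleton]; linarith [H.hu h])
  · exact ok_pair H.bc (by linarith [H.ma b]) (by linarith [H.ma c])
  · exact ok_le H.hw (by linarith [H.mc a, H.mc h, H.hw b])
  · exact ok_le H.hw (by rw [cs_singleton]; linarith)

lemma B3b {u v w : M → ℝ} {a b c : M} (H : BH u v w a b c)
    (h1 : 2 * u b < cs u (NN a b c)) (h2 : 2 * u c < cs u (NN a b c))
    (h3 : 2 * v a < cs v (NN a b c))
    (h m k : M) (hh : h ∈ NN a b c) (hm : m ∈ NN a b c) (hk : k ∈ NN a b c)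
    (hhk : h ≠ k) (hmk : m ≠ k) (du : cs u (NN a b c) ≤ 2 * u h)
    (dv : cs v (NN a b c) ≤ 2 * v m) (dw : cs w (NN a b c) ≤ 2 * w k) : Goal u v w := by
  obtain ⟨ka, kb, kc⟩ := mem_NN.1 hk
  have mh : h ∈ NN a b c \ {k} := by simp [hh, hhk]
  have mm : m ∈ NN a b c \ {k} := by simp [hm, hmk]
  have e1 := le_cs H.hu mh
  have e2 := le_cs H.hv mm
  have e3 := cs_sdiff_single w hk
  have e4 := cs_sdiff_single v hk
  have p1 : ∀ x : M → ℝ, cs x {b, c} = x b + x c := fun x => by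
    rw [cs_insert x (by simpa using H.bc), cs_singleton]
  have p2 : ∀ x : M → ℝ, cs x {a, k} = x a + x k := fun x => by
    rw [cs_insert x (by simpa using ka.symm), cs_singleton]
  refine ⟨{b, c}, {a, k}, NN a b c \ {k}, ?_, ?_, ?_, ?_, ?_, ?_, ?_, ?_, ?_, ?_⟩
  · simp [H.ab, H.ac, kb, kc]
  · simp [mem_NN]
  · simp [mem_NN]
  · intro e
    simp only [Finset.mem_insert, mem_NN, Finset.mem_singleton, Finset.mem_sdiff]
    tauto
  · exact ok_pair H.bc (by rw [p2]; linarith [H.ma b, H.hu a, H.hu k])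
      (by rw [p2]; linarith [H.ma c, H.hu a, H.hu k])
  · exact ok_pair H.bc (by linarith [H.hu b]) (by linarith [H.hu c])
  · exact ok_pair ka.symm (by rw [p1]; linarith [H.mb a, H.hv b, H.hv c])
      (by rw [p1]; linarith [H.mb k, H.hv b, H.hv c])
  · exact ok_pair ka.symm (by linarith [H.hv m]) (by linarith [H.hv m])
  · exact ok_le H.hw (by rw [p1]; linarith [H.mc k, H.hw b, H.hw c])
  · exact ok_le H.hw (by rw [p2]; linarith [H.hw a, H.hw k])

lemma caseB {u v w : M → ℝ} {a b c : M} (H : BH u v w a b c) : Goal u v w := by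
  by_contra hG
  have s12 : ¬ Goal v u w := fun h => hG h.swap12
  have s23 : ¬ Goal u w v := fun h => hG h.swap23
  have s13 : ¬ Goal w v u := fun h => hG h.swap13
  have s231 : ¬ Goal v w u := fun h => hG h.swap23.swap12
  have s312 : ¬ Goal w u v := fun h => hG h.swap12.swap23
  have H12 := H.swap12
  have H23 := H.swap23
  have H231 := H12.swap23
  have H312 := H23.swap12
  have H13 := H231.swap12
  have N12 : NN b a c = NN a b c := NN_swap12 a b c
  have N23 : NN a c b = NN a b c := NN_swap23 a b c
  have N231 : NN b c a = NN a b c := by rw [NN_swap23, NN_swap12]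
  have N312 : NN c a b = NN a b c := by rw [NN_swap12, NN_swap23]
  have N13 : NN c b a = NN a b c := by rw [NN_swap12, N231]
  obtain ⟨u1, u2⟩ := (B0' H).resolve_left hG
  obtain ⟨v1, v2⟩ := (B0' H12).resolve_left s12
  obtain ⟨w1, w2⟩ := (B0' H312).resolve_left s312
  rw [N12] at v1 v2
  rw [N312] at w1 w2
  have x1 : 2 * u c < cs u (NN a b c) := by
    by_contra h; push Not at h
    exact hG (B1 H h w1 w2)
  have x2 : 2 * u b < cs u (NN a b c) := by
    by_contra h; push Not at h
    exact s23 (B1 H23 (by rwa [N23]) (by rwa [N23]) (by rwa [N23]))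
  have x3 : 2 * v c < cs v (NN a b c) := by
    by_contra h; push Not at h
    exact s12 (B1 H12 (by rwa [N12]) (by rwa [N12]) (by rwa [N12]))
  have x4 : 2 * v a < cs v (NN a b c) := by
    by_contra h; push Not at h
    exact s231 (B1 H231 (by rwa [N231]) (by rwa [N231]) (by rwa [N231]))
  have x5 : 2 * w b < cs w (NN a b c) := by
    by_contra h; push Not at h
    exact s312 (B1 H312 (by rwa [N312]) (by rwa [N312]) (by rwa [N312]))
  have x6 : 2 * w a < cs w (NN a b c) := by
    by_contra h; push Not at h
    exact s13 (B1 H13 (by rwa [N13]) (by rwa [N13]) (by rwa [N13]))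
  obtain ⟨h, hh, du⟩ := (B2' H x2 x1 x4 x3 x6 x5).resolve_left hG
  obtain ⟨m, hm, dv⟩ := (B2' H12 (by rwa [N12]) (by rwa [N12]) (by rwa [N12]) (by rwa [N12])
    (by rwa [N12]) (by rwa [N12])).resolve_left s12
  obtain ⟨k, hk, dw⟩ := (B2' H312 (by rwa [N312]) (by rwa [N312]) (by rwa [N312]) (by rwa [N312])
    (by rwa [N312]) (by rwa [N312])).resolve_left s312
  rw [N12] at hm dv
  rw [N312] at hk dw
  have hhk : h ≠ k := by
    rintro rfl
    exact hG (B3a H x2 x1 x6 h hh du dw)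
  have hmk : m ≠ k := by
    rintro rfl
    exact s12 (B3a H12 (by rwa [N12]) (by rwa [N12]) (by rwa [N12]) m (by rwa [N12])
      (by rwa [N12]) (by rwa [N12]))
  exact hG (B3b H x2 x1 x4 h m k hh hm hk hhk hmk du dv dw)

lemma three_agents {u v w : M → ℝ} (hu : ∀ e, 0 ≤ u e) (hv : ∀ e, 0 ≤ v e) (hw : ∀ e, 0 ≤ w e) :
    Goal u v w := by
  have large : ∀ c : M → ℝ, (∀ e, 5 * c e ≤ cs c Finset.univ) ∨
      ∃ g, (∀ e, c e ≤ c g) ∧ cs c Finset.univ ≤ 5 * c g := by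
    intro c
    by_cases h : ∀ e, 5 * c e ≤ cs c Finset.univ
    · exact Or.inl h
    · right
      push Not at h
      obtain ⟨x, hx⟩ := h
      obtain ⟨g, -, hg⟩ := Finset.exists_max_image Finset.univ c ⟨x, Finset.mem_univ x⟩
      exact ⟨g, fun e => hg e (Finset.mem_univ e), by linarith [hg x (Finset.mem_univ x)]⟩
  rcases large u with su | ⟨a, ma, la⟩
  · rcases large v with sv | ⟨b, mb, lb⟩
    · exact caseS hu hv hw su sv
    · rcases large w with sw | ⟨c, mc, lc⟩
      · exact (caseS hu hw hv su sw).swap23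
      · by_cases bc : b = c
        · subst bc
          exact (caseI hv hw hu b lb lc).swap23.swap12
        · exact (caseA hv hw hu su b c bc lc mb).swap23.swap12
  · rcases large v with sv | ⟨b, mb, lb⟩
    · rcases large w with sw | ⟨c, mc, lc⟩
      · exact (caseS hv hw hu sv sw).swap23.swap12
      · by_cases ac : a = c
        · subst ac
          exact (caseI hu hw hv a la lc).swap23
        · exact (caseA hu hw hv sv a c ac lc ma).swap23
    · by_cases ab : a = b
      · subst ab
        exact caseI hu hv hw a la lb
      rcases large w with sw | ⟨c, mc, lc⟩
      · exact caseA hu hv hw sw a b ab lb ma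
      · by_cases ac : a = c
        · subst ac
          exact (caseI hu hw hv a la lc).swap23
        by_cases bc : b = c
        · subst bc
          exact (caseI hv hw hu b lb lc).swap23.swap12
        exact caseB ⟨hu, hv, hw, ab, ac, bc, ma, mb, mc, la, lb, lc⟩

end Helpers


/-- For any chore-division instance with three agents and additive cost functions
(given by nonnegative item costs `w`), a `2`-EFX allocation exists. -/
theorem two_efx_exists_three_agents
    (M : Type*) [Fintype M] [DecidableEq M]
    (w : Fin 3 → M → ℝ) (hw : ∀ i e, 0 ≤ w i e) :
    ∃ X : Fin 3 → Finset M, IsAllocation X ∧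
      ∀ i j : Fin 3, ∀ e ∈ X i,
        ∑ f ∈ X i \ {e}, w i f ≤ 2 * ∑ f ∈ X j, w i f := by
  obtain ⟨A, B, C, h1, h2, h3, h4, a, b, c, d, e, f⟩ := three_agents (hw 0) (hw 1) (hw 2)
  have self : ∀ (i : Fin 3) (P : Finset M), okk (w i) P P := fun i P =>
    ok_le (hw i) (by linarith [cs_nonneg (hw i) P])
  refine ⟨![A, B, C], ⟨?_, ?_⟩, ?_⟩
  · intro i j hij
    fin_cases i <;> fin_cases j <;> first | exact absurd rfl hij | skip
    · exact h1
    · exact h2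
    · exact h1.symm
    · exact h3
    · exact h2.symm
    · exact h3.symm
  · intro x
    rcases h4 x with h | h | h
    · exact ⟨0, h⟩
    · exact ⟨1, h⟩
    · exact ⟨2, h⟩
  · intro i j
    fin_cases i <;> fin_cases j
    · exact self 0 A
    · exact a
    · exact b
    · exact c
    · exact self 1 B
    · exact d
    · exact e
    · exact f
    · exact self 2 C
end
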